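/- arXiv:2304.00273 — 4 statements merged into one kernel-verified Lean document; each statement's English description precedes it below -/
import Mathlib

section
/- Every finite-dimensional Zinbiel superalgebra over an arbitrary field is nilpotent: if Z = Z₀ ⊕ Z₁ is a Zinbiel superalgebra over a field K with dim_K Z < ∞, then there exists s ≥ 1 such that Z^s = 0. -/
/-!
For homogeneous `y`, `z` put `y ∗ z = y·z + (-1)^{|y||z|} z·y`, so that `(x·y)·z = x·(y ∗ z)`.
The product `∗` is associative, supercommutative and has no nonzero idempotent. In finite
dimension every operator `y ∗ -` is therefore nilpotent, and by Engel's theorem `N ⊆ Z ∗ N`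
forces `N = 0`.

Every nonzero graded ideal `I` then meets the annihilator of `Z`: if `V` is the part of `I` killed
by `Z ∗ -`, then `V ≠ 0`, `(Z·V)·Z = 0`, and `W = Z·(Z·V) = Z ∗ (Z·V)` is a graded ideal. If
`W = 0`, the annihilator contains `Z·V`, or `V` in case `Z·V = 0`. If `W ≠ 0`, it is strictly
smaller than `I`, as otherwise `Z·V ⊆ Z ∗ (Z·V)`, and one passes to `W`. Dividing out the
annihilator, nilpotency follows by induction on the dimension.
-/

open Module Submodule

/-- A Zinbiel superalgebra over a field `K`: a `K`-vector space `Z` with a bilinear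
multiplication and a direct sum decomposition `Z = Z₀ ⊕ Z₁` such that
`Zᵢ·Zⱼ ⊆ Z_{i+j (mod 2)}` and, for all homogeneous `x, y, z`,
`(x·y)·z = x·(y·z + (−1)^{|y||z|} z·y)`. -/
structure ZinbielSuper (K : Type*) [Field K] (Z : Type*) [AddCommGroup Z] [Module K Z] where
  mul : Z →ₗ[K] Z →ₗ[K] Z
  Z0 : Submodule K Z
  Z1 : Submodule K Z
  compl : IsCompl Z0 Z1
  mul00 : ∀ x ∈ Z0, ∀ y ∈ Z0, mul x y ∈ Z0
  mul01 : ∀ x ∈ Z0, ∀ y ∈ Z1, mul x y ∈ Z1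
  mul10 : ∀ x ∈ Z1, ∀ y ∈ Z0, mul x y ∈ Z1
  mul11 : ∀ x ∈ Z1, ∀ y ∈ Z1, mul x y ∈ Z0
  zinb_even : ∀ x y z : Z, (x ∈ Z0 ∨ x ∈ Z1) → (y ∈ Z0 ∨ y ∈ Z1) → (z ∈ Z0 ∨ z ∈ Z1) →
    (y ∈ Z0 ∨ z ∈ Z0) → mul (mul x y) z = mul x (mul y z + mul z y)
  zinb_odd : ∀ x y z : Z, (x ∈ Z0 ∨ x ∈ Z1) → y ∈ Z1 → z ∈ Z1 →
    mul (mul x y) z = mul x (mul y z - mul z y)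

variable {K : Type*} [Field K] {Z : Type*} [AddCommGroup Z] [Module K Z]

/-- The linear span of all products `a·b` with `a ∈ A`, `b ∈ B`. -/
def mulSub (mul : Z →ₗ[K] Z →ₗ[K] Z) (A B : Submodule K Z) : Submodule K Z :=
  Submodule.span K {z : Z | ∃ a ∈ A, ∃ b ∈ B, mul a b = z}

/-- `lcs S k = Z^k` for `k ≥ 1`: `Z¹ = Z`, `Z^{k+1} = Z·Z^k`. (`lcs S 0 = ⊤` by convention.) -/
def lcs (S : ZinbielSuper K Z) : ℕ → Submodule K Z
  | 0 => ⊤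
  | 1 => ⊤
  | (k+2) => mulSub S.mul ⊤ (lcs S (k+1))

theorem le_ker_flip_of_map₂_eq_bot {R M N P : Type*} [CommRing R] [AddCommGroup M]
    [AddCommGroup N] [AddCommGroup P] [Module R M] [Module R N] [Module R P]
    {f : M →ₗ[R] N →ₗ[R] P} {q : Submodule R N} (h : map₂ f ⊤ q = ⊥) : q ≤ f.flip.ker :=
  fun _ hy => LinearMap.ext fun _ => (mem_bot R).1 (h ▸ apply_mem_map₂ f mem_top hy)

theorem exists_mem_or_mem_of_mem_map {R M N : Type*} [Ring R] [AddCommGroup M] [AddCommGroup N]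
    [Module R M] [Module R N] {f : M →ₗ[R] N} {p q : Submodule R M} {y : N}
    (hy : y ∈ p.map f ∨ y ∈ q.map f) : ∃ x, (x ∈ p ∨ x ∈ q) ∧ f x = y := by
  rcases hy with ⟨x, hx, rfl⟩ | ⟨x, hx, rfl⟩
  exacts [⟨x, .inl hx, rfl⟩, ⟨x, .inr hx, rfl⟩]

theorem finrank_quotient_lt_of_ne_bot [FiniteDimensional K Z] {N : Submodule K Z} (hN : N ≠ ⊥) :
    finrank K (Z ⧸ N) < finrank K Z := by
  have := Submodule.one_le_finrank_iff.2 hN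
  have := N.finrank_quotient_add_finrank
  lia

theorem mulSub_eq_map₂ (f : Z →ₗ[K] Z →ₗ[K] Z) (A B : Submodule K Z) :
    mulSub f A B = map₂ f A B :=
  (map₂_eq_span_image2 f A B).symm

section NilAlgebra

theorem exists_isIdempotentElem_mul_of_isArtinianRing {A : Type*} [CommRing A] [IsArtinianRing A]
    (t : A) : ∃ (n : ℕ) (c : A), IsIdempotentElem (t * c) ∧ t ^ n * (t * c) = t ^ n := by
  obtain ⟨n, y, hy⟩ := IsArtinian.exists_pow_succ_smul_dvd t (1 : A)
  have pow_mul_u : t ^ n * (t * y) = t ^ n := by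
    simpa [pow_succ, mul_assoc] using hy
  have pow_mul_u_pow (k : ℕ) : t ^ n * (t * y) ^ k = t ^ n := by
    induction k with
    | zero => simp
    | succ k ih => rw [pow_succ, ← mul_assoc, ih, pow_mul_u]
  have u_pow_mul (k : ℕ) : (t * y) ^ n * (t * y) ^ k = (t * y) ^ n := by
    rw [mul_pow t y n, mul_right_comm, pow_mul_u_pow]
  have u_pow_eq : t * (y * (t * y) ^ n) = (t * y) ^ n := by
    rw [← mul_assoc, mul_comm]
    simpa using u_pow_mul 1
  exact ⟨n, y * (t * y) ^ n, by rw [u_pow_eq]; exact u_pow_mul n,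
    by rw [u_pow_eq, pow_mul_u_pow]⟩

variable {R A : Type*} [CommRing R] [Ring A] [Algebra R A] {B : NonUnitalSubalgebra R A} {b : A}

theorem mul_mem_of_mem_adjoin_singleton {c : A} (hb : b ∈ B) (hc : c ∈ Algebra.adjoin R {b}) :
    b * c ∈ B := by
  rw [Algebra.adjoin_singleton_eq_range_aeval] at hc
  obtain ⟨q, rfl⟩ := hc
  change b * Polynomial.aeval b q ∈ B
  induction q using Polynomial.induction_on with
  | C r => simpa [← Algebra.commutes, ← Algebra.smul_def] using SMulMemClass.smul_mem r hb
  | add q₁ q₂ h₁ h₂ => simpa [mul_add] using add_mem h₁ h₂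
  | monomial n r h => simpa [pow_succ, mul_assoc] using mul_mem h hb

theorem isNilpotent_of_forall_isIdempotentElem [IsArtinianRing R]
    (hB : ∀ e ∈ B, IsIdempotentElem e → e = 0) (hb : b ∈ B) (hint : IsIntegral R b) :
    IsNilpotent b := by
  have : Module.Finite R (Algebra.adjoin R {b}) :=
    Module.Finite.iff_fg.2 hint.fg_adjoin_singleton
  have : IsArtinianRing (Algebra.adjoin R {b}) := .of_finite R _
  obtain ⟨n, c, hidem, hpow⟩ := exists_isIdempotentElem_mul_of_isArtinianRing
    (⟨b, Algebra.self_mem_adjoin_singleton R b⟩ : Algebra.adjoin R {b})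
  have hc : b * (c : A) = 0 :=
    hB _ (mul_mem_of_mem_adjoin_singleton hb c.2) (congrArg Subtype.val hidem)
  refine ⟨n, ?_⟩
  have : b ^ n * (b * (c : A)) = b ^ n := congrArg Subtype.val hpow
  rw [← this, hc, mul_zero]

end NilAlgebra

section Engel

attribute [local instance] LieRing.ofAssociativeRing LieAlgebra.ofAssociativeAlgebra
  LieRingModule.ofAssociativeModule LieModule.ofAssociativeModule

theorem eq_bot_of_le_nonUnitalSubalgebra_smul {R M : Type*} [CommRing R] [AddCommGroup M]
    [Module R M] [IsNoetherian R M] {B : NonUnitalSubalgebra R (Module.End R M)}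
    (hB : ∀ b ∈ B, IsNilpotent b) {N : Submodule R M} (hN : N ≤ B.toSubmodule • N) : N = ⊥ := by
  let L : LieSubalgebra R (Module.End R M) :=
    { B.toSubmodule with
      lie_mem' := fun hx hy => B.sub_mem (B.mul_mem hx hy) (B.mul_mem hy hx) }
  have : LieModule.IsNilpotent L M :=
    (LieModule.isNilpotent_iff_forall' (R := R)).2 fun b => hB b b.2
  have le_lcs (k : ℕ) : N ≤ (LieModule.lowerCentralSeries R L M k : Submodule R M) := by
    induction k with
    | zero => simp
    | succ k ih =>
      refine hN.trans (smul_le.2 fun b hb m hm => ?_)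
      rw [LieModule.lowerCentralSeries_succ]
      exact LieSubmodule.lie_mem_lie (x := (⟨b, hb⟩ : L)) (LieSubmodule.mem_top _) (ih hm)
  obtain ⟨k, hk⟩ := (LieModule.isNilpotent_iff R L M).1 this
  simpa [hk] using le_lcs k

end Engel

section EvenBilinear

variable {R M : Type*} [CommRing R] [AddCommGroup M] [Module R M] {p : M →ₗ[R] M}
  {f : M →ₗ[R] M →ₗ[R] M} {N : Submodule R M}

/-- `f` maps `Mᵢ × Mⱼ` to `Mᵢ₊ⱼ`, where `M = M₀ ⊕ M₁` is the `ℤ/2`-grading with `M₁ = range p` and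
`M₀ = ker p` given by a projection `p`. A submodule `N` is graded if and only if
`N ≤ N.comap p`. -/
def IsEvenBilinear (p : M →ₗ[R] M) (f : M →ₗ[R] M →ₗ[R] M) : Prop :=
  ∀ x y, p (f x y) = f (p x) (y - p y) + f (x - p x) (p y)

theorem IsEvenBilinear.flip (hf : IsEvenBilinear p f) : IsEvenBilinear p f.flip := fun x y => by
  simpa only [LinearMap.flip_apply, add_comm] using hf y x

theorem IsEvenBilinear.map₂_top_le_comap (hf : IsEvenBilinear p f) (hN : N ≤ N.comap p) :
    map₂ f ⊤ N ≤ (map₂ f ⊤ N).comap p :=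
  map₂_le.2 fun x _ y hy => by
    rw [mem_comap, hf]
    exact add_mem (apply_mem_map₂ f mem_top (sub_mem hy (hN hy)))
      (apply_mem_map₂ f mem_top (hN hy))

theorem IsEvenBilinear.ker_le_comap (hp : IsIdempotentElem p) (hf : IsEvenBilinear p f) :
    f.ker ≤ f.ker.comap p := fun x hx => by
  have hp' (y : M) : p (p y) = p y := LinearMap.congr_fun hp y
  have hx' (y : M) : f x y = 0 := LinearMap.congr_fun hx y
  have apply_even (y : M) : f (p x) (y - p y) = 0 := by
    simpa [hp', hx'] using (hf x (y - p y)).symm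
  have apply_odd (y : M) : f (p x) (p y) = 0 := by
    simpa [hp', hx'] using (hf x (p y)).symm
  ext y
  simpa [apply_odd] using apply_even y

end EvenBilinear

namespace ZinbielSuper

variable (S : ZinbielSuper K Z)

section Star

/-- The projection of `Z` onto its odd part `Z₁` along its even part `Z₀`. -/
noncomputable def oddProj : Z →ₗ[K] Z := S.Z1.projection S.Z0 S.compl.symm

variable {S} in
theorem oddProj_of_mem_Z0 {x : Z} (hx : x ∈ S.Z0) : S.oddProj x = 0 :=
  projection_apply_of_mem_right _ hx

variable {S} in
theorem oddProj_of_mem_Z1 {x : Z} (hx : x ∈ S.Z1) : S.oddProj x = x :=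
  projection_apply_of_mem_left _ hx

theorem oddProj_mem (x : Z) : S.oddProj x ∈ S.Z1 := projection_apply_mem _ x

theorem sub_oddProj_mem (x : Z) : x - S.oddProj x ∈ S.Z0 :=
  (projection_apply_eq_zero_iff S.compl.symm).1 <| by
    rw [map_sub]
    exact sub_eq_zero.2 (oddProj_of_mem_Z1 (S.oddProj_mem x)).symm

@[simp]
theorem oddProj_oddProj (x : Z) : S.oddProj (S.oddProj x) = S.oddProj x :=
  oddProj_of_mem_Z1 (S.oddProj_mem x)

theorem isIdempotentElem_oddProj : IsIdempotentElem S.oddProj :=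
  LinearMap.ext S.oddProj_oddProj

@[elab_as_elim]
theorem homogeneous_induction {P : Z → Prop} (even : ∀ x ∈ S.Z0, P x) (odd : ∀ x ∈ S.Z1, P x)
    (add : ∀ x y, P x → P y → P (x + y)) (x : Z) : P x := by
  obtain ⟨x₀, h₀, x₁, h₁, rfl⟩ := mem_sup.1 (S.compl.sup_eq_top ▸ mem_top (x := x))
  exact add _ _ (even _ h₀) (odd _ h₁)

theorem isEvenBilinear_mul : IsEvenBilinear S.oddProj S.mul := fun x y => by
  induction x using S.homogeneous_induction with
  | add x x' h h' =>
    simp only [map_add, map_sub, LinearMap.add_apply, LinearMap.sub_apply, h, h']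
    abel
  | even x hx =>
    induction y using S.homogeneous_induction with
    | add y y' h h' =>
      simp only [map_add, map_sub, h, h']
      abel
    | even y hy => simp [oddProj_of_mem_Z0, hx, hy, S.mul00 x hx y hy]
    | odd y hy => simp [oddProj_of_mem_Z0, oddProj_of_mem_Z1, hx, hy, S.mul01 x hx y hy]
  | odd x hx =>
    induction y using S.homogeneous_induction with
    | add y y' h h' =>
      simp only [map_add, map_sub, h, h']
      abel
    | even y hy => simp [oddProj_of_mem_Z0, oddProj_of_mem_Z1, hx, hy, S.mul10 x hx y hy]
    | odd y hy => simp [oddProj_of_mem_Z0, oddProj_of_mem_Z1, hx, hy, S.mul11 x hx y hy]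

/-- The associated product, which is `y ∗ z = y·z + (-1)^{|y||z|} z·y` for homogeneous `y`, `z`;
here `p z · p y` is the only part of `z·y` whose sign changes. -/
noncomputable def star : Z →ₗ[K] Z →ₗ[K] Z :=
  S.mul + S.mul.flip - (2 : K) • (S.mul.compl₁₂ S.oddProj S.oddProj).flip

theorem star_apply (y z : Z) :
    S.star y z = S.mul y z + S.mul z y - (2 : K) • S.mul (S.oddProj z) (S.oddProj y) := rfl

theorem star_comm (y z : Z) :
    S.star y z = S.star z y - (2 : K) • S.star (S.oddProj z) (S.oddProj y) := by
  simp only [star_apply, oddProj_oddProj]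
  module

theorem star_of_mem_Z0_left {y : Z} (hy : y ∈ S.Z0) (z : Z) :
    S.star y z = S.mul y z + S.mul z y := by
  simp [star_apply, oddProj_of_mem_Z0 hy]

theorem star_of_mem_Z0_right (y : Z) {z : Z} (hz : z ∈ S.Z0) :
    S.star y z = S.mul y z + S.mul z y := by
  simp [star_apply, oddProj_of_mem_Z0 hz]

theorem star_of_mem_Z1 {y z : Z} (hy : y ∈ S.Z1) (hz : z ∈ S.Z1) :
    S.star y z = S.mul y z - S.mul z y := by
  rw [star_apply, oddProj_of_mem_Z1 hy, oddProj_of_mem_Z1 hz]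
  module

theorem mul_mul (x y z : Z) : S.mul (S.mul x y) z = S.mul x (S.star y z) := by
  have of_homogeneous {x : Z} (hx : x ∈ S.Z0 ∨ x ∈ S.Z1) :
      S.mul (S.mul x y) z = S.mul x (S.star y z) := by
    induction y using S.homogeneous_induction with
    | add y y' h h' => simp only [map_add, LinearMap.add_apply, h, h']
    | even y hy =>
      rw [S.star_of_mem_Z0_left hy]
      induction z using S.homogeneous_induction with
      | add z z' h h' =>
        simp only [map_add, LinearMap.add_apply, h, h']
        abel
      | even z hz => exact S.zinb_even x y z hx (.inl hy) (.inl hz) (.inl hy)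
      | odd z hz => exact S.zinb_even x y z hx (.inl hy) (.inr hz) (.inl hy)
    | odd y hy =>
      induction z using S.homogeneous_induction with
      | add z z' h h' => simp only [map_add, h, h']
      | even z hz =>
        rw [S.star_of_mem_Z0_right y hz]
        exact S.zinb_even x y z hx (.inr hy) (.inl hz) (.inr hz)
      | odd z hz =>
        rw [S.star_of_mem_Z1 hy hz]
        exact S.zinb_odd x y z hx hy hz
  induction x using S.homogeneous_induction with
  | add x x' h h' => simp only [map_add, LinearMap.add_apply, h, h']
  | even x hx => exact of_homogeneous (.inl hx)
  | odd x hx => exact of_homogeneous (.inr hx)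

theorem isEvenBilinear_star : IsEvenBilinear S.oddProj S.star := fun x y => by
  simp only [star_apply, map_add, map_sub, map_smul, LinearMap.sub_apply, S.isEvenBilinear_mul _ _,
    oddProj_oddProj]
  module

theorem star_assoc (x y z : Z) : S.star (S.star x y) z = S.star x (S.star y z) := by
  simp only [star_apply, map_add, map_sub, map_smul, LinearMap.add_apply, LinearMap.sub_apply,
    LinearMap.smul_apply, mul_mul, S.isEvenBilinear_mul _ _, oddProj_oddProj, smul_add, smul_sub,
    smul_smul]
  module

theorem eq_zero_of_star_self_of_mem_Z0 {a : Z} (ha : a ∈ S.Z0) (h : S.star a a = a) : a = 0 := by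
  have two_smul_mul : (2 : K) • S.mul a a = a := by
    rw [two_smul, ← S.star_of_mem_Z0_left ha, h]
  have mul_mul_self : S.mul (S.mul a a) a = S.mul a a := by rw [mul_mul, h]
  have mul_self : S.mul a a = a := by
    calc S.mul a a = S.mul ((2 : K) • S.mul a a) a := by rw [two_smul_mul]
      _ = a := by rw [map_smul, LinearMap.smul_apply, mul_mul_self, two_smul_mul]
  simpa [mul_self, two_smul] using two_smul_mul

theorem eq_zero_of_star_self {e : Z} (he : S.star e e = e) : e = 0 := by
  have odd_eq : S.oddProj e = S.star (S.oddProj e) (e - S.oddProj e)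
      + S.star (e - S.oddProj e) (S.oddProj e) := by
    conv_lhs => rw [← he, S.isEvenBilinear_star]
  have odd_star_odd : S.star (S.oddProj e) (S.oddProj e) = 0 := by
    rw [S.star_of_mem_Z1 (S.oddProj_mem e) (S.oddProj_mem e), sub_self]
  have even_eq : S.star (e - S.oddProj e) (e - S.oddProj e) = e - S.oddProj e := by
    conv_rhs => rw [odd_eq]
    conv_rhs => enter [1]; rw [← he]
    simp only [map_sub, LinearMap.sub_apply, odd_star_odd]
    abel
  have even_zero : e - S.oddProj e = 0 :=
    S.eq_zero_of_star_self_of_mem_Z0 (S.sub_oddProj_mem e) even_eq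
  rw [sub_eq_zero.1 even_zero, odd_eq, even_zero]
  simp

/-- The operators `y ∗ -`, an associative algebra because `∗` is associative. -/
noncomputable def starMulLeft : NonUnitalSubalgebra K (Module.End K Z) :=
  { LinearMap.range S.star with
    mul_mem' := by
      rintro _ _ ⟨x, rfl⟩ ⟨y, rfl⟩
      exact ⟨S.star x y, LinearMap.ext (S.star_assoc x y)⟩ }

theorem isNilpotent_of_mem_starMulLeft [FiniteDimensional K Z] {b : Module.End K Z}
    (hb : b ∈ S.starMulLeft) : IsNilpotent b := by
  refine isNilpotent_of_forall_isIdempotentElem ?_ hb (Algebra.IsIntegral.isIntegral b)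
  rintro _ ⟨e, rfl⟩ he
  -- `e ∗ -` is an idempotent operator, but `e` need not be an idempotent of `∗`, while `e ∗ e` is.
  have star_star (z : Z) : S.star e (S.star e z) = S.star e z := LinearMap.congr_fun he z
  have h0 : S.star e e = 0 :=
    S.eq_zero_of_star_self (by rw [star_assoc, star_star, star_star])
  ext z
  rw [← star_star, ← star_assoc, h0]
  simp

theorem eq_bot_of_le_map₂_star [FiniteDimensional K Z] {N : Submodule K Z}
    (hN : N ≤ map₂ S.star ⊤ N) : N = ⊥ :=
  eq_bot_of_le_nonUnitalSubalgebra_smul (fun _ => S.isNilpotent_of_mem_starMulLeft)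
    (hN.trans (map₂_le.2 fun y _ _ hn => smul_mem_smul (⟨y, rfl⟩ : S.star y ∈ S.starMulLeft) hn))

theorem inf_ker_flip_star_ne_bot [FiniteDimensional K Z] {N : Submodule K Z}
    (hN : map₂ S.star ⊤ N ≤ N) (hne : N ≠ ⊥) : N ⊓ S.star.flip.ker ≠ ⊥ := by
  induction N using WellFoundedLT.induction with
  | ind N ih =>
    by_cases hbot : map₂ S.star ⊤ N = ⊥
    · rwa [inf_eq_left.2 (le_ker_flip_of_map₂_eq_bot hbot)]
    · have hlt : map₂ S.star ⊤ N < N :=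
        lt_of_le_of_ne hN fun h => hne (S.eq_bot_of_le_map₂_star h.ge)
      exact ne_bot_of_le_ne_bot (ih _ hlt (map₂_le_map₂_right hN) hbot) (inf_le_inf_right _ hN)

end Star

section Annihilator

/-- The two-sided annihilator `{x | x·Z = 0 = Z·x}` of `Z`. -/
def annihilator : Submodule K Z := S.mul.ker ⊓ S.mul.flip.ker

/-- Two-sided ideals that are graded submodules. -/
structure IsGradedIdeal (I : Submodule K Z) : Prop where
  map₂_top_left_le : map₂ S.mul ⊤ I ≤ I
  map₂_top_right_le : map₂ S.mul I ⊤ ≤ I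
  le_comap_oddProj : I ≤ I.comap S.oddProj

variable {S}

theorem IsGradedIdeal.map₂_star_le {I : Submodule K Z} (hI : S.IsGradedIdeal I) :
    map₂ S.star ⊤ I ≤ I :=
  map₂_le.2 fun z _ x hx => by
    have hxz (w : Z) {y : Z} (hy : y ∈ I) : S.mul y w ∈ I :=
      hI.map₂_top_right_le (apply_mem_map₂ _ hy mem_top)
    rw [star_apply]
    exact sub_mem (add_mem (hI.map₂_top_left_le (apply_mem_map₂ _ mem_top hx)) (hxz z hx))
      (smul_mem _ _ (hxz _ (hI.le_comap_oddProj hx)))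

variable (S)

theorem isGradedIdeal_top : S.IsGradedIdeal ⊤ := ⟨le_top, le_top, fun _ _ => mem_top⟩

theorem isGradedIdeal_annihilator : S.IsGradedIdeal S.annihilator where
  map₂_top_left_le := map₂_le.2 fun z _ x hx => by
    have : S.mul z x = 0 := LinearMap.congr_fun hx.2 z
    rw [this]
    exact zero_mem _
  map₂_top_right_le := map₂_le.2 fun x hx z _ => by
    have : S.mul x z = 0 := LinearMap.congr_fun hx.1 z
    rw [this]
    exact zero_mem _
  le_comap_oddProj := le_inf
    (inf_le_left.trans (S.isEvenBilinear_mul.ker_le_comap S.isIdempotentElem_oddProj))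
    (inf_le_right.trans (S.isEvenBilinear_mul.flip.ker_le_comap S.isIdempotentElem_oddProj))

theorem ker_flip_star_le_comap : S.star.flip.ker ≤ S.star.flip.ker.comap S.oddProj :=
  S.isEvenBilinear_star.flip.ker_le_comap S.isIdempotentElem_oddProj

theorem ker_flip_star_le_ker_star : S.star.flip.ker ≤ S.star.ker := fun x hx => by
  have star_eq_zero {y : Z} (hy : y ∈ S.star.flip.ker) (z : Z) : S.star z y = 0 :=
    LinearMap.congr_fun hy z
  ext z
  rw [star_comm, star_eq_zero hx, star_eq_zero (S.ker_flip_star_le_comap hx)]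
  simp

theorem map₂_mul_ker_flip_star_le_ker_mul : map₂ S.mul ⊤ S.star.flip.ker ≤ S.mul.ker :=
  map₂_le.2 fun z _ x hx => by
    have star_eq_zero : S.star x = 0 := S.ker_flip_star_le_ker_star hx
    ext w
    rw [mul_mul, star_eq_zero]
    simp

theorem ker_flip_star_inf_ker_flip_mul_le_annihilator :
    S.star.flip.ker ⊓ S.mul.flip.ker ≤ S.annihilator := by
  refine le_inf (fun x hx => ?_) inf_le_right
  have mul_eq_zero (z : Z) : S.mul z x = 0 := LinearMap.congr_fun hx.2 z
  have mul_odd_eq_zero (z : Z) : S.mul z (S.oddProj x) = 0 := LinearMap.congr_fun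
    (S.isEvenBilinear_mul.flip.ker_le_comap S.isIdempotentElem_oddProj hx.2) z
  have star_eq_zero : S.star x = 0 := S.ker_flip_star_le_ker_star hx.1
  ext z
  simpa [star_apply, mul_eq_zero, mul_odd_eq_zero] using LinearMap.congr_fun star_eq_zero z

variable {S} in
theorem map₂_star_eq_map₂_mul {Y : Submodule K Z} (hY : Y ≤ S.mul.ker) :
    map₂ S.star ⊤ Y = map₂ S.mul ⊤ Y := by
  have star_eq_mul (z : Z) {y : Z} (hy : y ∈ Y) : S.star z y = S.mul z y := by
    have mul_eq_zero : S.mul y = 0 := hY hy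
    have mul_odd_eq_zero : S.mul (S.oddProj y) = 0 :=
      S.isEvenBilinear_mul.ker_le_comap S.isIdempotentElem_oddProj (hY hy)
    simp [star_apply, mul_eq_zero, mul_odd_eq_zero]
  exact le_antisymm
    (map₂_le.2 fun z _ y hy => star_eq_mul z hy ▸ apply_mem_map₂ S.mul mem_top hy)
    (map₂_le.2 fun z _ y hy => star_eq_mul z hy ▸ apply_mem_map₂ S.star mem_top hy)

variable {S} in
theorem isGradedIdeal_map₂_mul {Y : Submodule K Z} (hY : Y ≤ S.mul.ker)
    (hgr : Y ≤ Y.comap S.oddProj) : S.IsGradedIdeal (map₂ S.mul ⊤ Y) := by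
  have mul_mem (a : Z) {y : Z} (hy : y ∈ Y) : S.mul a y ∈ map₂ S.mul ⊤ Y :=
    apply_mem_map₂ _ mem_top hy
  have mul_eq_zero {y : Z} (hy : y ∈ Y) (a : Z) : S.mul y a = 0 :=
    LinearMap.congr_fun (hY hy) a
  have left_le : map₂ S.mul ⊤ (map₂ S.mul ⊤ Y) ≤ map₂ S.mul ⊤ Y := by
    refine map₂_le.2 fun a _ w hw => ?_
    suffices map₂ S.mul ⊤ Y ≤ (map₂ S.mul ⊤ Y).comap (S.mul a) from this hw
    refine map₂_le.2 fun b _ y hy => ?_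
    have mul_mul_eq : S.mul a (S.mul b y) = S.mul (S.mul a b) y := by
      simp [mul_mul, star_apply, mul_eq_zero hy, mul_eq_zero (hgr hy)]
    rw [mem_comap, mul_mul_eq]
    exact mul_mem _ hy
  refine ⟨left_le, ?_, S.isEvenBilinear_mul.map₂_top_le_comap hgr⟩
  refine map₂_le.2 fun w hw b _ => ?_
  suffices map₂ S.mul ⊤ Y ≤ (map₂ S.mul ⊤ Y).comap (S.mul.flip b) from this hw
  refine map₂_le.2 fun a _ y hy => ?_
  rw [mem_comap, LinearMap.flip_apply, mul_mul, star_apply, mul_eq_zero hy, zero_add]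
  exact left_le (apply_mem_map₂ _ mem_top
    (sub_mem (mul_mem _ hy) (smul_mem _ _ (mul_mem _ (hgr hy)))))

variable {S} in
theorem IsGradedIdeal.inf_annihilator_ne_bot [FiniteDimensional K Z] {I : Submodule K Z}
    (hI : S.IsGradedIdeal I) (hne : I ≠ ⊥) : I ⊓ S.annihilator ≠ ⊥ := by
  induction I using WellFoundedLT.induction with
  | ind I ih =>
    set V := I ⊓ S.star.flip.ker
    have hVgr : V ≤ V.comap S.oddProj :=
      inf_le_inf hI.le_comap_oddProj S.ker_flip_star_le_comap
    have hVne : V ≠ ⊥ := S.inf_ker_flip_star_ne_bot hI.map₂_star_le hne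
    have hZV : map₂ S.mul ⊤ V ≤ S.mul.ker :=
      (map₂_le_map₂_right inf_le_right).trans S.map₂_mul_ker_flip_star_le_ker_mul
    have hZVI : map₂ S.mul ⊤ V ≤ I :=
      (map₂_le_map₂_right inf_le_left).trans hI.map₂_top_left_le
    set W := map₂ S.mul ⊤ (map₂ S.mul ⊤ V) with hW
    have hWI : W ≤ I := (map₂_le_map₂_right hZVI).trans hI.map₂_top_left_le
    by_cases hW0 : W = ⊥
    · by_cases hZV0 : map₂ S.mul ⊤ V = ⊥
      · exact ne_bot_of_le_ne_bot hVne (le_inf inf_le_left ((le_inf inf_le_right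
          (le_ker_flip_of_map₂_eq_bot hZV0)).trans
            S.ker_flip_star_inf_ker_flip_mul_le_annihilator))
      · exact ne_bot_of_le_ne_bot hZV0
          (le_inf hZVI (le_inf hZV (le_ker_flip_of_map₂_eq_bot hW0)))
    · have hWne : W ≠ I := fun h => by
        have hZV0 := S.eq_bot_of_le_map₂_star
          (hZVI.trans (h.ge.trans (map₂_star_eq_map₂_mul hZV).ge))
        exact hW0 (by rw [hW, hZV0, map₂_bot_right])
      have hWideal : S.IsGradedIdeal W :=
        isGradedIdeal_map₂_mul hZV (S.isEvenBilinear_mul.map₂_top_le_comap hVgr)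
      exact ne_bot_of_le_ne_bot (ih W (lt_of_le_of_ne hWI hWne) hWideal hW0)
        (inf_le_inf_right _ hWI)

theorem annihilator_ne_bot [FiniteDimensional K Z] [Nontrivial Z] : S.annihilator ≠ ⊥ := by
  simpa using S.isGradedIdeal_top.inf_annihilator_ne_bot top_ne_bot

end Annihilator

section Quotient

variable {S} {I : Submodule K Z}

/-- The Zinbiel superalgebra `Z ⧸ I`. -/
def quotient (hI : S.IsGradedIdeal I) : ZinbielSuper K (Z ⧸ I) where
  mul := (S.mul.compr₂ I.mkQ).liftQ₂ I I
    (fun x hx => LinearMap.ext fun z => (Submodule.Quotient.mk_eq_zero I).2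
      (hI.map₂_top_right_le (apply_mem_map₂ _ hx mem_top)))
    (fun x hx => LinearMap.ext fun z => (Submodule.Quotient.mk_eq_zero I).2
      (hI.map₂_top_left_le (apply_mem_map₂ _ mem_top hx)))
  Z0 := S.Z0.map I.mkQ
  Z1 := S.Z1.map I.mkQ
  compl := by
    refine ⟨disjoint_def.2 ?_, codisjoint_iff.2 ?_⟩
    · rintro _ ⟨x, hx, rfl⟩ ⟨y, hy, hxy⟩
      have hmem : y - x ∈ I := (Submodule.Quotient.eq I).1 hxy
      have hy' : y ∈ I := by
        simpa [oddProj_of_mem_Z0 hx, oddProj_of_mem_Z1 hy] using hI.le_comap_oddProj hmem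
      exact hxy ▸ (Submodule.Quotient.mk_eq_zero I).2 hy'
    · rw [← Submodule.map_sup, S.compl.sup_eq_top, Submodule.map_top, range_mkQ]
  mul00 := by rintro _ ⟨x, hx, rfl⟩ _ ⟨y, hy, rfl⟩; exact ⟨_, S.mul00 x hx y hy, rfl⟩
  mul01 := by rintro _ ⟨x, hx, rfl⟩ _ ⟨y, hy, rfl⟩; exact ⟨_, S.mul01 x hx y hy, rfl⟩
  mul10 := by rintro _ ⟨x, hx, rfl⟩ _ ⟨y, hy, rfl⟩; exact ⟨_, S.mul10 x hx y hy, rfl⟩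
  mul11 := by rintro _ ⟨x, hx, rfl⟩ _ ⟨y, hy, rfl⟩; exact ⟨_, S.mul11 x hx y hy, rfl⟩
  zinb_even := by
    intro X Y T hX hY hT hYT
    obtain ⟨x, hx, rfl⟩ := exists_mem_or_mem_of_mem_map hX
    rcases hYT with ⟨y, hy, rfl⟩ | ⟨z, hz, rfl⟩
    · obtain ⟨z, hz, rfl⟩ := exists_mem_or_mem_of_mem_map hT
      exact congrArg I.mkQ (S.zinb_even x y z hx (.inl hy) hz (.inl hy))
    · obtain ⟨y, hy, rfl⟩ := exists_mem_or_mem_of_mem_map hY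
      exact congrArg I.mkQ (S.zinb_even x y z hx hy (.inl hz) (.inr hz))
  zinb_odd := by
    rintro X _ _ hX ⟨y, hy, rfl⟩ ⟨z, hz, rfl⟩
    obtain ⟨x, hx, rfl⟩ := exists_mem_or_mem_of_mem_map hX
    exact congrArg I.mkQ (S.zinb_odd x y z hx hy hz)

theorem mkQ_mul (hI : S.IsGradedIdeal I) (x y : Z) :
    I.mkQ (S.mul x y) = (quotient hI).mul (I.mkQ x) (I.mkQ y) := rfl

end Quotient

section LowerCentralSeries

theorem lcs_succ {s : ℕ} (hs : 1 ≤ s) : lcs S (s + 1) = map₂ S.mul ⊤ (lcs S s) := by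
  obtain ⟨k, rfl⟩ := Nat.exists_eq_add_of_le' hs
  exact mulSub_eq_map₂ _ _ _

variable {S}

theorem lcs_le_comap {W : Type*} [AddCommGroup W] [Module K W] {T : ZinbielSuper K W}
    {f : Z →ₗ[K] W} (hf : ∀ x y, f (S.mul x y) = T.mul (f x) (f y)) (s : ℕ) :
    lcs S s ≤ (lcs T s).comap f := by
  rcases s with - | s
  · exact fun _ _ => mem_top
  · induction s with
    | zero => exact fun _ _ => mem_top
    | succ s ih =>
      rw [S.lcs_succ s.succ_pos, T.lcs_succ s.succ_pos]
      refine map₂_le.2 fun x _ y hy => ?_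
      rw [mem_comap, hf]
      exact apply_mem_map₂ T.mul mem_top (ih hy)

theorem lcs_succ_eq_bot_of_le_annihilator {s : ℕ} (hs : 1 ≤ s) (h : lcs S s ≤ S.annihilator) :
    lcs S (s + 1) = ⊥ := by
  rw [S.lcs_succ hs, eq_bot_iff]
  exact map₂_le.2 fun z _ x hx => LinearMap.congr_fun (h hx).2 z

end LowerCentralSeries

end ZinbielSuper

/-- Every finite-dimensional Zinbiel superalgebra over an arbitrary field is nilpotent. -/
theorem zinbielSuper_nilpotent (K : Type*) [Field K] (Z : Type*) [AddCommGroup Z]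
    [Module K Z] [FiniteDimensional K Z] (S : ZinbielSuper K Z) :
    ∃ s : ℕ, 1 ≤ s ∧ lcs S s = ⊥ := by
  induction hd : finrank K Z using Nat.strong_induction_on generalizing Z with
  | _ d ih =>
    rcases subsingleton_or_nontrivial Z with hZ | hZ
    · exact ⟨1, le_rfl, Subsingleton.elim _ _⟩
    · have hI := S.isGradedIdeal_annihilator
      have finrank_lt : finrank K (Z ⧸ S.annihilator) < d :=
        hd ▸ finrank_quotient_lt_of_ne_bot S.annihilator_ne_bot
      obtain ⟨s, hs, hbot⟩ := ih _ finrank_lt _ (ZinbielSuper.quotient hI) rfl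
      have lcs_le : lcs S s ≤ S.annihilator := by
        simpa [hbot] using ZinbielSuper.lcs_le_comap
          (f := S.annihilator.mkQ) (ZinbielSuper.mkQ_mul hI) s
      exact ⟨s + 1, Nat.le_add_left 1 s, ZinbielSuper.lcs_succ_eq_bot_of_le_annihilator hs lcs_le⟩
end

section
/- If Z = Z₀ ⊕ Z₁ is an n-dimensional null-filiform Zinbiel superalgebra over ℂ with Z₁ ≠ 0, then Z is generated by a single odd element: there exists f ∈ Z₁ such that the smallest linear subspace of Z containing f and closed under the multiplication of Z is Z itself. -/
open Module Submodule

variable {K : Type*} [Field K] {Z : Type*} [AddCommGroup Z] [Module K Z]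

/-- An `n`-dimensional Zinbiel superalgebra is null-filiform if `dim Z^i = n + 1 − i`
for `1 ≤ i ≤ n + 1`. -/
def NullFiliform (S : ZinbielSuper K Z) : Prop :=
  ∀ i : ℕ, 1 ≤ i → i ≤ finrank K Z + 1 →
    finrank K (lcs S i) = finrank K Z + 1 - i

/-!
`Z²` has codimension one, so a subalgebra `P` not contained in `Z²` satisfies `P + Z² = Z`. The
Zinbiel identity makes the powers `Z^k` two-sided ideals with `Z^k · Z ⊆ Z^{k+1}`, so multiplying
`Z = P + Z^k` by itself gives `Z² ⊆ P + Z^{k+1}`, whence `Z = P + Z^{k+1}`, and nilpotency forces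
`P = Z`. Thus any odd element outside `Z²` generates. Such an element exists: otherwise the
subalgebra `Z₀` would not be contained in `Z²`, which would make it all of `Z`.
-/

namespace ZinbielSuper

/-- The homogeneous elements of a Zinbiel superalgebra, zero being counted as homogeneous. -/
def homogeneousElements (S : ZinbielSuper K Z) : Set Z := S.Z0 ∪ S.Z1

/-- Graded subspaces of a Zinbiel superalgebra, encoded as those spanned by their homogeneous
elements; the Zinbiel identity extends to products of such subspaces. -/
def IsGraded (S : ZinbielSuper K Z) (A : Submodule K Z) : Prop :=
  span K (A ∩ S.homogeneousElements) = A

variable {S : ZinbielSuper K Z} {A B C P : Submodule K Z}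

theorem mul_mem_homogeneousElements {x y : Z} (hx : x ∈ S.homogeneousElements)
    (hy : y ∈ S.homogeneousElements) : S.mul x y ∈ S.homogeneousElements := by
  rcases hx with hx | hx <;> rcases hy with hy | hy
  · exact Or.inl (S.mul00 x hx y hy)
  · exact Or.inr (S.mul01 x hx y hy)
  · exact Or.inr (S.mul10 x hx y hy)
  · exact Or.inl (S.mul11 x hx y hy)

theorem isGraded_top : S.IsGraded ⊤ := by
  rw [IsGraded, top_coe, Set.univ_inter, homogeneousElements, span_union, span_eq, span_eq,
    S.compl.sup_eq_top]

theorem IsGraded.map₂_mul (hA : S.IsGraded A) (hB : S.IsGraded B) :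
    S.IsGraded (map₂ S.mul A B) := by
  refine le_antisymm (span_le.2 Set.inter_subset_left) ?_
  conv_lhs => rw [← hA, ← hB, map₂_span_span]
  refine span_mono ?_
  rintro _ ⟨x, hx, y, hy, rfl⟩
  exact ⟨apply_mem_map₂ S.mul hx.1 hy.1, mul_mem_homogeneousElements hx.2 hy.2⟩

theorem mul_mul_eq_mul_add_or_sub {x y z : Z} (hx : x ∈ S.homogeneousElements)
    (hy : y ∈ S.homogeneousElements) (hz : z ∈ S.homogeneousElements) :
    S.mul (S.mul x y) z = S.mul x (S.mul y z + S.mul z y) ∨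
      S.mul (S.mul x y) z = S.mul x (S.mul y z - S.mul z y) := by
  by_cases h : y ∈ S.Z0 ∨ z ∈ S.Z0
  · exact Or.inl (S.zinb_even x y z hx hy hz h)
  · rw [not_or] at h
    exact Or.inr (S.zinb_odd x y z hx (hy.resolve_left h.1) (hz.resolve_left h.2))

theorem map₂_mul_map₂_mul_le (hA : S.IsGraded A) (hB : S.IsGraded B) (hC : S.IsGraded C) :
    map₂ S.mul (map₂ S.mul A B) C ≤ map₂ S.mul A (map₂ S.mul B C ⊔ map₂ S.mul C B) := by
  conv_lhs => rw [← hA, ← hB, ← hC, map₂_span_span, map₂_span_span]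
  refine span_le.2 ?_
  rintro _ ⟨_, ⟨x, hx, y, hy, rfl⟩, z, hz, rfl⟩
  have hyz : S.mul y z ∈ map₂ S.mul B C ⊔ map₂ S.mul C B :=
    mem_sup_left (apply_mem_map₂ S.mul hy.1 hz.1)
  have hzy : S.mul z y ∈ map₂ S.mul B C ⊔ map₂ S.mul C B :=
    mem_sup_right (apply_mem_map₂ S.mul hz.1 hy.1)
  rcases mul_mul_eq_mul_add_or_sub hx.2 hy.2 hz.2 with h | h
  · exact Set.mem_of_eq_of_mem h (apply_mem_map₂ S.mul hx.1 (add_mem hyz hzy))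
  · exact Set.mem_of_eq_of_mem h (apply_mem_map₂ S.mul hx.1 (sub_mem hyz hzy))

theorem lcs_add_two (S : ZinbielSuper K Z) (k : ℕ) :
    lcs S (k + 2) = map₂ S.mul ⊤ (lcs S (k + 1)) :=
  (map₂_eq_span_image2 S.mul ⊤ (lcs S (k + 1))).symm

theorem isGraded_lcs (S : ZinbielSuper K Z) (k : ℕ) : S.IsGraded (lcs S (k + 1)) := by
  induction k with
  | zero => exact isGraded_top
  | succ k ih => exact S.lcs_add_two k ▸ isGraded_top.map₂_mul ih

theorem map₂_mul_lcs_top_le (S : ZinbielSuper K Z) (k : ℕ) :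
    map₂ S.mul (lcs S (k + 1)) ⊤ ≤ lcs S (k + 2) := by
  induction k with
  | zero => exact (S.lcs_add_two 0).ge
  | succ k ih =>
    calc map₂ S.mul (lcs S (k + 2)) ⊤
        = map₂ S.mul (map₂ S.mul ⊤ (lcs S (k + 1))) ⊤ := by rw [lcs_add_two]
      _ ≤ map₂ S.mul ⊤ (map₂ S.mul (lcs S (k + 1)) ⊤ ⊔ map₂ S.mul ⊤ (lcs S (k + 1))) :=
          map₂_mul_map₂_mul_le isGraded_top (S.isGraded_lcs k) isGraded_top
      _ ≤ map₂ S.mul ⊤ (lcs S (k + 2)) :=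
          map₂_le_map₂_right (sup_le ih (S.lcs_add_two k).ge)
      _ = lcs S (k + 3) := (S.lcs_add_two (k + 1)).symm

theorem lcs_two_le_sup_lcs {k : ℕ} (hP : map₂ S.mul P P ≤ P) (hk : P ⊔ lcs S (k + 1) = ⊤) :
    lcs S 2 ≤ P ⊔ lcs S (k + 2) := by
  have hmul : map₂ S.mul P (lcs S (k + 1)) ≤ lcs S (k + 2) :=
    (map₂_le_map₂_left le_top).trans (S.lcs_add_two k).ge
  calc lcs S 2
      = map₂ S.mul (P ⊔ lcs S (k + 1)) ⊤ := by rw [hk]; exact S.lcs_add_two 0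
    _ = map₂ S.mul P (P ⊔ lcs S (k + 1)) ⊔ map₂ S.mul (lcs S (k + 1)) ⊤ := by
        rw [map₂_sup_left, hk]
    _ = map₂ S.mul P P ⊔ map₂ S.mul P (lcs S (k + 1)) ⊔ map₂ S.mul (lcs S (k + 1)) ⊤ := by
        rw [map₂_sup_right]
    _ ≤ P ⊔ lcs S (k + 2) :=
        sup_le (sup_le_sup hP hmul) (le_sup_of_le_right (S.map₂_mul_lcs_top_le k))

theorem sup_lcs_eq_top (hP : map₂ S.mul P P ≤ P) (h2 : P ⊔ lcs S 2 = ⊤) (k : ℕ) :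
    P ⊔ lcs S (k + 1) = ⊤ := by
  induction k with
  | zero => exact sup_top_eq P
  | succ k ih => exact top_le_iff.1 (h2 ▸ sup_le le_sup_left (lcs_two_le_sup_lcs hP ih))

end ZinbielSuper

namespace NullFiliform

open ZinbielSuper

variable [FiniteDimensional K Z] {S : ZinbielSuper K Z}

theorem isCoatom_lcs_two [Nontrivial Z] (hnf : NullFiliform S) : IsCoatom (lcs S 2) := by
  have hpos : 0 < finrank K Z := finrank_pos
  have hdim : finrank K (lcs S 2) = finrank K Z + 1 - 2 := hnf 2 (by lia) (by lia)
  have hcodim : finrank K (Z ⧸ lcs S 2) = 1 := by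
    have := finrank_quotient_add_finrank (lcs S 2)
    lia
  exact isSimpleModule_iff_isCoatom.1 (isSimpleModule_iff_finrank_eq_one.2 hcodim)

theorem lcs_finrank_add_one_eq_bot (hnf : NullFiliform S) : lcs S (finrank K Z + 1) = ⊥ :=
  finrank_eq_zero.1 ((hnf _ (by lia) le_rfl).trans (Nat.sub_self _))

theorem eq_top_of_not_le_lcs_two [Nontrivial Z] (hnf : NullFiliform S) {P : Submodule K Z}
    (hP : ∀ a ∈ P, ∀ b ∈ P, S.mul a b ∈ P) (hP2 : ¬P ≤ lcs S 2) : P = ⊤ := by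
  have hsup : P ⊔ lcs S 2 = ⊤ := (hnf.isCoatom_lcs_two.not_le_iff_codisjoint.1 hP2).symm.eq_top
  simpa only [hnf.lcs_finrank_add_one_eq_bot, sup_bot_eq] using
    sup_lcs_eq_top (map₂_le.2 hP) hsup (finrank K Z)

theorem not_Z1_le_lcs_two [Nontrivial Z] (hnf : NullFiliform S) (h1 : S.Z1 ≠ ⊥) :
    ¬S.Z1 ≤ lcs S 2 := by
  intro h1_le
  have h0_not_le : ¬S.Z0 ≤ lcs S 2 := fun h0_le =>
    hnf.isCoatom_lcs_two.ne_top (top_le_iff.1 (S.compl.sup_eq_top ▸ sup_le h0_le h1_le))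
  have h0_top : S.Z0 = ⊤ := hnf.eq_top_of_not_le_lcs_two S.mul00 h0_not_le
  exact h1 (eq_bot_of_top_isCompl (h0_top ▸ S.compl))

end NullFiliform

theorem nullFiliform_single_odd_generator_general [FiniteDimensional K Z]
    (S : ZinbielSuper K Z) (hnf : NullFiliform S) (h1 : S.Z1 ≠ ⊥) :
    ∃ f ∈ S.Z1, ∀ P : Submodule K Z,
      f ∈ P → (∀ a ∈ P, ∀ b ∈ P, S.mul a b ∈ P) → P = ⊤ := by
  obtain ⟨x, -, hx⟩ := exists_mem_ne_zero_of_ne_bot h1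
  have : Nontrivial Z := nontrivial_of_ne x 0 hx
  obtain ⟨f, hf, hf2⟩ := SetLike.not_le_iff_exists.1 (hnf.not_Z1_le_lcs_two h1)
  exact ⟨f, hf, fun P hfP hP => hnf.eq_top_of_not_le_lcs_two hP fun hle => hf2 (hle hfP)⟩

/-- A null-filiform Zinbiel superalgebra over `ℂ` with nonzero odd part
is generated by a single odd element. -/
theorem nullFiliform_single_odd_generator
    {Z : Type*} [AddCommGroup Z] [Module ℂ Z] [FiniteDimensional ℂ Z]
    (S : ZinbielSuper ℂ Z) (hnf : NullFiliform S) (h1 : S.Z1 ≠ ⊥) :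
    ∃ f ∈ S.Z1, ∀ P : Submodule ℂ Z,
      f ∈ P → (∀ a ∈ P, ∀ b ∈ P, S.mul a b ∈ P) → P = ⊤ :=
  nullFiliform_single_odd_generator_general S hnf h1
end

section
/- Let Z = Z₀ ⊕ Z₁ be a complex naturally graded filiform Zinbiel superalgebra with dim Z₀ = n ≥ 5 and dim Z₁ = m. Then there exist a basis {e₁, …, e_n} of Z₀ and a basis {f₁, …, f_m} of Z₁ such that e_i·e_j = C(i+j−1, j) e_{i+j} for all i, j with 2 ≤ i+j ≤ n−1, and e₁·f_j = f_{j+1} for 1 ≤ j ≤ m−1. -/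
open Module Submodule

variable {K : Type*} [Field K] {Z : Type*} [AddCommGroup Z] [Module K Z]

/-- `pow0 S k = Z₀^k` for `k ≥ 1`: `Z₀¹ = Z₀`, `Z₀^{k+1} = Z₀·Z₀^k`. -/
def pow0 (S : ZinbielSuper K Z) : ℕ → Submodule K Z
  | 0 => S.Z0
  | 1 => S.Z0
  | (k+2) => mulSub S.mul S.Z0 (pow0 S (k+1))

/-- `pow1 S k = Z₁^k` for `k ≥ 1`: `Z₁¹ = Z₁`, `Z₁^{k+1} = Z₀·Z₁^k`. -/
def pow1 (S : ZinbielSuper K Z) : ℕ → Submodule K Z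
  | 0 => S.Z1
  | 1 => S.Z1
  | (k+2) => mulSub S.mul S.Z0 (pow1 S (k+1))

/-- `Z` is naturally graded: `Z` is isomorphic to `gr(Z)`, i.e. `Z` admits a grading
`Z = ⊕_{i≥1} W i` compatible with the superalgebra structure whose induced filtration
is the natural filtration `(Z₀^k, Z₁^k)`. -/
def NaturallyGraded (S : ZinbielSuper K Z) : Prop :=
  ∃ W : ℕ → Submodule K Z,
    W 0 = ⊥ ∧
    (∀ i : ℕ, Disjoint (W i) (⨆ j : ℕ, ⨆ _ : j ≠ i, W j)) ∧
    (⨆ i : ℕ, W i) = ⊤ ∧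
    (∀ i j : ℕ, ∀ a ∈ W i, ∀ b ∈ W j, S.mul a b ∈ W (i + j)) ∧
    (∀ i : ℕ, W i = (W i ⊓ S.Z0) ⊔ (W i ⊓ S.Z1)) ∧
    (∀ k : ℕ, 1 ≤ k → pow0 S k = ⨆ i : ℕ, ⨆ _ : k ≤ i, (W i ⊓ S.Z0)) ∧
    (∀ k : ℕ, 1 ≤ k → pow1 S k = ⨆ i : ℕ, ⨆ _ : k ≤ i, (W i ⊓ S.Z1))

/-- Iterated left multiplication: `Lmul S x k v = L_x^k v`. -/
def Lmul (S : ZinbielSuper K Z) (x : Z) : ℕ → Z → Z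
  | 0 => fun v => v
  | (k+1) => fun v => S.mul x (Lmul S x k v)

/-- `Z` (with `dim Z₀ = n`, `dim Z₁ = m`) is filiform: there is a characteristic element
`x ∈ Z₀ \ Z₀²` whose left multiplication has Jordan type `(n−1, 1)` on `Z₀` (this being
lexicographically maximal among all `y ∈ Z₀ \ Z₀²`) and Jordan type `(m)` on `Z₁`. -/
def IsFiliform (S : ZinbielSuper K Z) (n m : ℕ) : Prop :=
  ∃ x : Z, x ∈ S.Z0 ∧ x ∉ pow0 S 2 ∧
    (∀ v ∈ S.Z0, Lmul S x (n - 1) v = 0) ∧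
    (∃ v ∈ S.Z0, Lmul S x (n - 2) v ≠ 0) ∧
    (∀ v ∈ S.Z1, Lmul S x m v = 0) ∧
    (∃ v ∈ S.Z1, Lmul S x (m - 1) v ≠ 0) ∧
    (∀ y : Z, y ∈ S.Z0 → y ∉ pow0 S 2 → ∀ v ∈ S.Z0, Lmul S y (n - 1) v = 0)

/-- From a basis `b` of a subspace `W` indexed by `Fin n`, the family of elements of `Z`
indexed by `1 ≤ t ≤ n`, with the convention that out-of-range indices give `0`. -/
noncomputable def sB {n : ℕ} {W : Submodule K Z} (b : Basis (Fin n) K W) : ℕ → Z :=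
  fun t => if h : 1 ≤ t ∧ t ≤ n then ((b ⟨t - 1, by omega⟩ : W) : Z) else 0

/-!
A naturally graded finite-dimensional superalgebra has only finitely many nonzero homogeneous
components, so its even part `A` is nilpotent: the powers `A^k` decrease strictly to `0`. Let `x` be
the filiform element and `L` its left multiplication. The point is that `x` itself generates the
Jordan block of size `n - 1` of `L` on `A`.

If `A = Kx + A²`, then `A^k = K L^{k-1}x + A^{k+1}` for all `k`, so `L^{n-1} = 0` would force
`dim A ≤ n - 1`. Hence `A²` has codimension at least two, and since `L^{n-2} ≠ 0` gives
`A^{n-1} ≠ 0`, strictness yields `A^n = 0` and `dim A²/A³ ≤ 1`. If `x·x ∈ A³`, the Zinbiel identity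
puts `L³v` in `A⁵` for every `v`, whence `L^{n-2}v ∈ A^n = 0`, which is absurd as `n ≥ 5`. So `x·x`
spans `A²` modulo `A³`, and applying `L^{n-3}` shows that `L^{n-2}x` spans the image of `L^{n-2}`.

The elements `e_i = L^{i-1}x` satisfy the binomial multiplication rule by induction on `i + j`, and
on the odd part any cyclic vector of `L` provides the `f_j`.
-/

section LinearAlgebra

variable {V : Type*} [AddCommGroup V] [Module K V]

theorem linearIndependent_pow_apply (L : End K V) {k : ℕ} {v : V}
    (hzero : (L ^ (k + 1)) v = 0) (hne : (L ^ k) v ≠ 0) :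
    LinearIndependent K fun i : Fin (k + 1) => (L ^ (i : ℕ)) v := by
  induction k generalizing v with
  | zero => simpa using hne
  | succ k ih =>
    have htail : LinearIndependent K fun i : Fin (k + 1) => (L ^ (i : ℕ)) (L v) := ih hzero hne
    have hcons : (fun i : Fin (k + 2) => (L ^ (i : ℕ)) v)
        = Fin.cons v fun i : Fin (k + 1) => (L ^ (i : ℕ)) (L v) := by
      funext i
      cases i using Fin.cases <;> simp [pow_succ]
    have hker : span K (Set.range fun i : Fin (k + 1) => (L ^ (i : ℕ)) (L v))
        ≤ LinearMap.ker (L ^ (k + 1)) := by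
      rw [span_le]
      rintro _ ⟨i, rfl⟩
      change (L ^ (k + 1) * L ^ (i : ℕ) * L) v = 0
      rw [(Commute.pow_pow_self L (k + 1) i).eq, mul_assoc, ← pow_succ, End.mul_apply, hzero,
        map_zero]
    rw [hcons]
    exact htail.finCons fun hv => hne (hker hv)

theorem exists_basis_castLE_eq [Module.Finite K V] {r n : ℕ} {v : Fin r → V}
    (hv : LinearIndependent K v) (hn : finrank K V = n) (hrn : r ≤ n) :
    ∃ b : Basis (Fin n) K V, ∀ i, b (i.castLE hrn) = v i := by
  induction hd : n - r generalizing r with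
  | zero =>
    obtain rfl : r = n := by lia
    exact ⟨basisOfLinearIndependentOfCardEqFinrank' v hv (by simpa using hn.symm), by simp⟩
  | succ d ih =>
    have hspan : span K (Set.range v) < ⊤ := lt_top_iff_ne_top.2 fun htop => by
      have hcard := finrank_span_eq_card hv
      rw [htop, finrank_top, Fintype.card_fin] at hcard
      lia
    obtain ⟨y, -, hy⟩ := SetLike.exists_of_lt hspan
    obtain ⟨b, hb⟩ := ih (hv.finSnoc hy) (by lia) (by lia)
    exact ⟨b, fun i => by simpa using hb i.castSucc⟩

theorem exists_basis_pow_apply [Module.Finite K V] (L : End K V) {k n : ℕ} {v : V}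
    (hzero : (L ^ (k + 1)) v = 0) (hne : (L ^ k) v ≠ 0) (hn : finrank K V = n) :
    ∃ b : Basis (Fin n) K V, ∀ i (hi : i < n), i ≤ k → b ⟨i, hi⟩ = (L ^ i) v := by
  have hli := linearIndependent_pow_apply L hzero hne
  have hkn : k + 1 ≤ n := by simpa [hn] using hli.fintype_card_le_finrank
  obtain ⟨b, hb⟩ := exists_basis_castLE_eq hli hn hkn
  exact ⟨b, fun i _ hik => hb ⟨i, by lia⟩⟩

theorem mem_span_singleton_sup_iff {Q : Submodule K V} {v z : V} :
    z ∈ span K {v} ⊔ Q ↔ ∃ c : K, ∃ q ∈ Q, c • v + q = z := by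
  simp [mem_sup, mem_span_singleton]

theorem finrank_le_finrank_add_one_of_le_span_singleton_sup [Module.Finite K V]
    {P Q : Submodule K V} {v : V} (h : P ≤ span K {v} ⊔ Q) : finrank K P ≤ finrank K Q + 1 := by
  have hspan : finrank K (span K {v}) ≤ 1 := by
    simpa using finrank_span_le_card (R := K) ({v} : Set V)
  have hadd := finrank_add_le_finrank_add_finrank (span K {v}) Q
  have hle := finrank_mono h
  lia

theorem le_span_singleton_sup_of_finrank_le_finrank_add_one [Module.Finite K V]
    {P Q : Submodule K V} {v : V} (hQP : Q ≤ P) (hvP : v ∈ P) (hvQ : v ∉ Q)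
    (hPQ : finrank K P ≤ finrank K Q + 1) : P ≤ span K {v} ⊔ Q := by
  have hlt := finrank_lt_finrank_of_lt (covBy_span_singleton_sup (K := K) hvQ).lt
  refine (eq_of_le_of_finrank_le (sup_le ?_ hQP) (by lia)).ge
  rwa [span_singleton_le_iff_mem]

theorem sB_succ {n t : ℕ} {W : Submodule K V} (b : Basis (Fin n) K W) (ht : t < n) :
    sB b (t + 1) = b ⟨t, ht⟩ :=
  dif_pos ⟨Nat.le_add_left 1 t, ht⟩

end LinearAlgebra

section LeftPow

variable {A : Type*} [AddCommGroup A] [Module K A]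

/-- The power `A^{k+1}` of a non-associative algebra `A` with multiplication `μ`, where `A^1 = A`
and `A^{k+1} = A·A^k`. The index is shifted so that `leftPow μ 0` is the whole algebra. -/
def leftPow (μ : A →ₗ[K] A →ₗ[K] A) : ℕ → Submodule K A
  | 0 => ⊤
  | k + 1 => map₂ μ ⊤ (leftPow μ k)

namespace leftPow

variable {μ : A →ₗ[K] A →ₗ[K] A} {N k : ℕ}

theorem mul_mem_succ (x : A) {y : A} (hy : y ∈ leftPow μ k) : μ x y ∈ leftPow μ (k + 1) :=
  apply_mem_map₂ μ mem_top hy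

theorem antitone (μ : A →ₗ[K] A →ₗ[K] A) : Antitone (leftPow μ) := by
  refine antitone_nat_of_succ_le fun k => ?_
  induction k with
  | zero => exact le_top
  | succ k ih => exact map₂_le_map₂_right ih

theorem pow_apply_mem (x : A) {v : A} (hv : v ∈ leftPow μ k) (i : ℕ) :
    (μ x ^ i) v ∈ leftPow μ (k + i) := by
  induction i with
  | zero => exact hv
  | succ i ih =>
    rw [pow_succ', End.mul_apply]
    exact mul_mem_succ x ih

theorem eq_bot_of_le_succ (hN : leftPow μ N = ⊥) (hk : leftPow μ k ≤ leftPow μ (k + 1)) :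
    leftPow μ k = ⊥ := by
  have hstable : ∀ i, leftPow μ k ≤ leftPow μ (k + i) := by
    intro i
    induction i with
    | zero => exact le_rfl
    | succ i ih => exact hk.trans (map₂_le_map₂_right ih)
  exact eq_bot_iff.2 <| (hstable N).trans <| hN ▸ antitone μ (Nat.le_add_left N k)

theorem finrank_add_le [Module.Finite K A] (hN : leftPow μ N = ⊥) {i : ℕ}
    (hne : leftPow μ (k + i) ≠ ⊥) :
    finrank K (leftPow μ (k + i)) + i ≤ finrank K (leftPow μ k) := by
  induction i with
  | zero => exact le_rfl
  | succ i ih =>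
    have hle : leftPow μ (k + i + 1) ≤ leftPow μ (k + i) := antitone μ (Nat.le_succ _)
    have hne' : leftPow μ (k + i) ≠ ⊥ := ne_bot_of_le_ne_bot hne hle
    have hlt : leftPow μ (k + i + 1) < leftPow μ (k + i) :=
      hle.lt_of_not_ge fun hge => hne' (eq_bot_of_le_succ hN hge)
    have := finrank_lt_finrank_of_lt hlt
    have := ih hne'
    change finrank K (leftPow μ (k + i + 1)) + (i + 1) ≤ _
    lia

theorem eq_bot_of_finrank_le [Module.Finite K A] (hN : leftPow μ N = ⊥)
    (hsq : finrank K (leftPow μ 1) ≤ k) : leftPow μ (k + 1) = ⊥ := by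
  by_contra hne
  rw [add_comm] at hne
  have := finrank_add_le hN hne
  exact hne (finrank_eq_zero.1 (by lia))

theorem finrank_le_of_pow_apply_ne_zero [Module.Finite K A] (hN : leftPow μ N = ⊥)
    (hsq : finrank K (leftPow μ 1) ≤ k) (hk : 2 ≤ k) {x v : A} (hne : (μ x ^ k) v ≠ 0) :
    finrank K (leftPow μ 1) ≤ finrank K (leftPow μ 2) + 1 := by
  obtain ⟨i, rfl⟩ := Nat.exists_eq_add_of_le hk
  have hmem : (μ x ^ (2 + i)) v ∈ leftPow μ (2 + i) := by
    simpa using pow_apply_mem (k := 0) x mem_top (2 + i)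
  have hne_bot : leftPow μ (2 + i) ≠ ⊥ := (Submodule.ne_bot_iff _).2 ⟨_, hmem, hne⟩
  have := one_le_finrank_iff.2 hne_bot
  have := finrank_add_le hN hne_bot
  lia

end leftPow

end LeftPow

/-- A bilinear multiplication `μ` satisfying the (non-super) Zinbiel identity
`(x·y)·z = x·(y·z + z·y)`; the even part of a Zinbiel superalgebra is of this kind. -/
def IsZinbiel {A : Type*} [AddCommGroup A] [Module K A] (μ : A →ₗ[K] A →ₗ[K] A) : Prop :=
  ∀ x y z, μ (μ x y) z = μ x (μ y z + μ z y)

namespace IsZinbiel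

variable {A : Type*} [AddCommGroup A] [Module K A] {μ : A →ₗ[K] A →ₗ[K] A} {N k : ℕ} {x : A}

theorem mul_mem_leftPow (hμ : IsZinbiel μ) {i j : ℕ} {a b : A} (ha : a ∈ leftPow μ i)
    (hb : b ∈ leftPow μ j) : μ a b ∈ leftPow μ (i + j + 1) := by
  match i, ha with
  | 0, _ => simpa using leftPow.mul_mem_succ a hb
  | i + 1, ha =>
    have hle : leftPow μ (i + 1) ≤ (leftPow μ (i + 1 + j + 1)).comap (μ.flip b) := by
      refine map₂_le.2 fun c _ d hd => ?_
      have hdb : μ d b ∈ leftPow μ (i + j + 1) := hμ.mul_mem_leftPow hd hb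
      have hbd : μ b d ∈ leftPow μ (j + i + 1) := hμ.mul_mem_leftPow hb hd
      rw [add_comm j i] at hbd
      rw [mem_comap, LinearMap.flip_apply, hμ, Nat.add_right_comm i 1 j]
      exact leftPow.mul_mem_succ c (add_mem hdb hbd)
    exact hle ha
  termination_by i + j

theorem pow_apply_mul_pow_apply (hμ : IsZinbiel μ) (x : A) (i j : ℕ) :
    μ ((μ x ^ i) x) ((μ x ^ j) x)
      = ((i + j + 1).choose (j + 1) : K) • (μ x ^ (i + j + 1)) x := by
  match i with
  | 0 => simp [pow_succ']
  | i + 1 =>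
    have hpascal : (i + j + 1).choose (j + 1) + (j + i + 1).choose (i + 1)
        = (i + 1 + j + 1).choose (j + 1) := by
      rw [add_comm j i, Nat.choose_symm_of_eq_add (by lia : i + j + 1 = (i + 1) + j),
        Nat.add_right_comm i 1 j, Nat.choose_succ_succ' (i + j + 1) j, add_comm]
    have hsucc : ∀ t, (μ x ^ (t + 1)) x = μ x ((μ x ^ t) x) := fun t => by
      rw [pow_succ', End.mul_apply]
    rw [hsucc i, hμ, hμ.pow_apply_mul_pow_apply x i j, hμ.pow_apply_mul_pow_apply x j i,
      ← hpascal, Nat.add_right_comm i 1 j, hsucc (i + j + 1), add_comm j i, ← add_smul, map_smul,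
      Nat.cast_add]
  termination_by i + j

theorem leftPow_le_span_pow_apply_sup (hμ : IsZinbiel μ) (hgen : ⊤ ≤ span K {x} ⊔ leftPow μ 1)
    (k : ℕ) : leftPow μ k ≤ span K {(μ x ^ k) x} ⊔ leftPow μ (k + 1) := by
  induction k with
  | zero => simpa [leftPow] using hgen
  | succ k ih =>
    refine map₂_le.2 fun a _ b hb => ?_
    obtain ⟨c, q, hq, rfl⟩ := mem_span_singleton_sup_iff.1 (hgen (mem_top : a ∈ ⊤))
    obtain ⟨d, r, hr, rfl⟩ := mem_span_singleton_sup_iff.1 (ih hb)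
    have hxr : μ x r ∈ leftPow μ (k + 2) := leftPow.mul_mem_succ x hr
    have hqb : μ q (d • (μ x ^ k) x + r) ∈ leftPow μ (k + 2) := by
      simpa [add_comm 1 k] using hμ.mul_mem_leftPow hq hb
    refine mem_span_singleton_sup_iff.2 ⟨c * d, c • μ x r + μ q (d • (μ x ^ k) x + r),
      add_mem (smul_mem _ c hxr) hqb, ?_⟩
    simp [pow_succ', mul_smul, add_assoc]

theorem finrank_le_of_pow_apply_eq_zero [Module.Finite K A] (hμ : IsZinbiel μ)
    (hN : leftPow μ N = ⊥) (hgen : ⊤ ≤ span K {x} ⊔ leftPow μ 1) (hzero : (μ x ^ k) x = 0) :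
    finrank K A ≤ k := by
  have hbot : leftPow μ k = ⊥ :=
    leftPow.eq_bot_of_le_succ hN (by simpa [hzero] using hμ.leftPow_le_span_pow_apply_sup hgen k)
  have hcodim : ∀ j, finrank K A ≤ finrank K (leftPow μ j) + j := by
    intro j
    induction j with
    | zero => exact (finrank_top K A).ge
    | succ j ih =>
      have := finrank_le_finrank_add_one_of_le_span_singleton_sup
        (hμ.leftPow_le_span_pow_apply_sup hgen j)
      lia
  have hk := hcodim k
  rwa [hbot, finrank_bot, zero_add] at hk

theorem finrank_leftPow_one_add_two_le [Module.Finite K A] (hμ : IsZinbiel μ)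
    (hN : leftPow μ N = ⊥) (hx : x ∉ leftPow μ 1) (hzero : (μ x ^ k) x = 0)
    (hk : k < finrank K A) : finrank K (leftPow μ 1) + 2 ≤ finrank K A := by
  have hlt : leftPow μ 1 < span K {x} ⊔ leftPow μ 1 := (covBy_span_singleton_sup hx).lt
  have hlt_top : span K {x} ⊔ leftPow μ 1 < ⊤ := lt_top_iff_ne_top.2 fun htop =>
    hk.not_ge (hμ.finrank_le_of_pow_apply_eq_zero hN htop.ge hzero)
  have := finrank_lt_finrank_of_lt hlt
  have := finrank_lt hlt_top.ne
  lia

theorem pow_three_apply_mem_leftPow_four (hμ : IsZinbiel μ) (hxx : μ x x ∈ leftPow μ 2) (v : A) :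
    (μ x ^ 3) v ∈ leftPow μ 4 := by
  have hv : v ∈ leftPow μ 0 := mem_top
  have hxv : μ x v ∈ leftPow μ 1 := leftPow.mul_mem_succ x hv
  have hxvx : μ (μ x v) x ∈ leftPow μ 3 := by
    rw [hμ, add_comm, ← hμ]
    exact hμ.mul_mem_leftPow (i := 2) (j := 0) hxx hv
  have hsum : μ x (μ x (μ x v) + μ (μ x v) x) ∈ leftPow μ 4 := by
    rw [← hμ]
    exact hμ.mul_mem_leftPow (i := 2) (j := 1) hxx hxv
  rw [map_add] at hsum
  have hxxxv : μ x (μ x (μ x v)) ∈ leftPow μ 4 :=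
    (Submodule.add_mem_iff_left _ (leftPow.mul_mem_succ x hxvx)).1 hsum
  simpa [pow_succ] using hxxxv

theorem pow_apply_self_ne_zero [Module.Finite K A] (hμ : IsZinbiel μ) (hN : leftPow μ N = ⊥)
    (hA : finrank K A = k + 2) (hk : 3 ≤ k) (hx : x ∉ leftPow μ 1)
    (hzero : (μ x ^ (k + 1)) x = 0) {v : A} (hne : (μ x ^ k) v ≠ 0) : (μ x ^ k) x ≠ 0 := by
  have hsq : finrank K (leftPow μ 1) ≤ k := by
    have := hμ.finrank_leftPow_one_add_two_le hN hx hzero (by lia)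
    lia
  have hbot := leftPow.eq_bot_of_finrank_le hN hsq
  have hcube := leftPow.finrank_le_of_pow_apply_ne_zero hN hsq (by lia) hne
  have hvanish : ∀ i j, i + j = k + 1 → ∀ w ∈ leftPow μ j, (μ x ^ i) w = 0 := by
    intro i j hij w hw
    have hmem := leftPow.pow_apply_mem x hw i
    rwa [add_comm j i, hij, hbot, mem_bot] at hmem
  obtain ⟨i, rfl⟩ := Nat.exists_eq_add_of_le' hk
  have hxx : μ x x ∉ leftPow μ 2 := fun hxx => hne <| by
    rw [pow_add, End.mul_apply]
    exact hvanish i 4 rfl _ (hμ.pow_three_apply_mem_leftPow_four hxx v)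
  have hspan : leftPow μ 1 ≤ span K {μ x x} ⊔ leftPow μ 2 :=
    le_span_singleton_sup_of_finrank_le_finrank_add_one (leftPow.antitone μ (by lia))
      (leftPow.mul_mem_succ x mem_top) hxx hcube
  obtain ⟨c, p, hp, hxv⟩ := mem_span_singleton_sup_iff.1
    (hspan (leftPow.mul_mem_succ x mem_top : μ x v ∈ leftPow μ 1))
  intro hself
  refine hne ?_
  rw [pow_succ, End.mul_apply] at hself ⊢
  rw [← hxv, map_add, map_smul, hself, smul_zero, zero_add]
  exact hvanish (i + 2) 2 rfl p hp

end IsZinbiel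

namespace ZinbielSuper

variable (S : ZinbielSuper K Z)

/-- The multiplication of the even part `Z₀`. -/
def evenMul : S.Z0 →ₗ[K] S.Z0 →ₗ[K] S.Z0 where
  toFun x := (S.mul x).restrict (S.mul00 x x.2)
  map_add' x y := by ext; simp
  map_smul' c x := by ext; simp

theorem isZinbiel_evenMul : IsZinbiel S.evenMul := fun x y z =>
  Subtype.ext <| S.zinb_even x y z (.inl x.2) (.inl y.2) (.inl z.2) (.inl y.2)

theorem map_subtype_leftPow_evenMul (k : ℕ) :
    (leftPow S.evenMul k).map S.Z0.subtype = pow0 S (k + 1) := by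
  induction k with
  | zero => exact map_subtype_top _
  | succ k ih =>
    have hmulSub : pow0 S (k + 2) = map₂ S.mul S.Z0 (pow0 S (k + 1)) :=
      (map₂_eq_span_image2 S.mul S.Z0 (pow0 S (k + 1))).symm
    rw [hmulSub, ← ih]
    apply le_antisymm
    · rw [map_le_iff_le_comap]
      exact map₂_le.2 fun a _ b hb => apply_mem_map₂ S.mul a.2 (mem_map_of_mem hb)
    · refine map₂_le.2 fun a ha _ => ?_
      rintro ⟨b, hb, rfl⟩
      exact mem_map_of_mem (leftPow.mul_mem_succ (⟨a, ha⟩ : S.Z0) hb)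

theorem Lmul_eq_pow_restrict {x : Z} {p : Submodule K Z} (hp : ∀ v ∈ p, S.mul x v ∈ p) (k : ℕ)
    (v : p) : Lmul S x k v = (((S.mul x).restrict hp) ^ k) v := by
  induction k with
  | zero => rfl
  | succ k ih =>
    rw [pow_succ', End.mul_apply, LinearMap.coe_restrict_apply, ← ih, Lmul]

end ZinbielSuper

theorem NaturallyGraded.exists_pow0_succ_eq_bot [FiniteDimensional K Z] {S : ZinbielSuper K Z}
    (hS : NaturallyGraded S) : ∃ N, pow0 S (N + 1) = ⊥ := by
  obtain ⟨W, -, hdisjoint, -, -, -, hpow0, -⟩ := hS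
  obtain ⟨M, hM⟩ := (WellFoundedGT.finite_ne_bot_of_iSupIndep hdisjoint).bddAbove
  have hW : ∀ i, M + 1 ≤ i → W i = ⊥ := fun i hi => by
    by_contra hne
    exact (hM hne).not_gt hi
  refine ⟨M, ?_⟩
  rw [hpow0 (M + 1) (Nat.le_add_left 1 M)]
  exact iSup₂_eq_bot.2 fun i hi => by rw [hW i hi, bot_inf_eq]

/-- An element `x ∈ Z₀ \ Z₀²` whose left multiplication has nilpotency index `n - 1` on `Z₀` and
`m` on `Z₁`. For `dim Z₀ = n` and `dim Z₁ = m` this says that the Jordan types are `(n - 1, 1)` and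
`(m)`; unlike in `IsFiliform`, maximality among the elements of `Z₀ \ Z₀²` is not required. -/
structure IsFiliformElement (S : ZinbielSuper K Z) (n m : ℕ) (x : Z) : Prop where
  mem_Z0 : x ∈ S.Z0
  notMem_sq : x ∉ pow0 S 2
  even_zero : ∀ v ∈ S.Z0, Lmul S x (n - 1) v = 0
  even_ne_zero : ∃ v ∈ S.Z0, Lmul S x (n - 2) v ≠ 0
  odd_zero : ∀ v ∈ S.Z1, Lmul S x m v = 0
  odd_ne_zero : ∃ v ∈ S.Z1, Lmul S x (m - 1) v ≠ 0

theorem IsFiliform.exists_isFiliformElement {S : ZinbielSuper K Z} {n m : ℕ}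
    (hS : IsFiliform S n m) : ∃ x, IsFiliformElement S n m x := by
  obtain ⟨x, hx, hsq, heven, heven', hodd, hodd', -⟩ := hS
  exact ⟨x, hx, hsq, heven, heven', hodd, hodd'⟩

namespace IsFiliformElement

variable {S : ZinbielSuper K Z} {n m : ℕ} {x : Z}

theorem exists_even_basis (hx : IsFiliformElement S n m x) (hn : finrank K S.Z0 = n) (h5 : 5 ≤ n)
    {N : ℕ} (hN : pow0 S (N + 1) = ⊥) :
    ∃ b : Basis (Fin n) K S.Z0, ∀ i (hi : i < n), i ≤ n - 2 →
      b ⟨i, hi⟩ = (S.evenMul ⟨x, hx.mem_Z0⟩ ^ i) ⟨x, hx.mem_Z0⟩ := by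
  obtain ⟨k, rfl⟩ := Nat.exists_eq_add_of_le' (show 2 ≤ n by lia)
  have : Module.Finite K S.Z0 := finite_of_finrank_pos (by lia)
  have hLmul (i : ℕ) (v : S.Z0) :
      Lmul S x i v = ((S.evenMul ⟨x, hx.mem_Z0⟩ ^ i) v : S.Z0) :=
    S.Lmul_eq_pow_restrict (S.mul00 x hx.mem_Z0) i v
  have hnil : leftPow S.evenMul N = ⊥ := by
    apply map_injective_of_injective S.Z0.injective_subtype
    rw [S.map_subtype_leftPow_evenMul, hN, Submodule.map_bot]
  have hsq : (⟨x, hx.mem_Z0⟩ : S.Z0) ∉ leftPow S.evenMul 1 := fun hmem =>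
    hx.notMem_sq (S.map_subtype_leftPow_evenMul 1 ▸ mem_map_of_mem hmem)
  have hzero : (S.evenMul ⟨x, hx.mem_Z0⟩ ^ (k + 1)) ⟨x, hx.mem_Z0⟩ = 0 :=
    Subtype.ext <| (hLmul _ _).symm.trans (hx.even_zero x hx.mem_Z0)
  obtain ⟨v, hv, hne⟩ := hx.even_ne_zero
  have hne' : (S.evenMul ⟨x, hx.mem_Z0⟩ ^ k) ⟨v, hv⟩ ≠ 0 := fun h =>
    hne ((hLmul k ⟨v, hv⟩).trans (congrArg Subtype.val h))
  exact exists_basis_pow_apply _ hzero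
    (S.isZinbiel_evenMul.pow_apply_self_ne_zero hnil hn (by lia) hsq hzero hne') hn

theorem exists_odd_basis (hx : IsFiliformElement S n m x) (hm : finrank K S.Z1 = m) :
    ∃ (b : Basis (Fin m) K S.Z1) (u : S.Z1), ∀ i (hi : i < m),
      (b ⟨i, hi⟩ : Z) = Lmul S x i u := by
  obtain ⟨u, hu, hne⟩ := hx.odd_ne_zero
  cases m with
  | zero => exact absurd (hx.odd_zero u hu) hne
  | succ k =>
    have : Module.Finite K S.Z1 := finite_of_finrank_pos (by lia)
    have hLmul := S.Lmul_eq_pow_restrict (S.mul01 x hx.mem_Z0)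
    have hzero : ((S.mul x).restrict (S.mul01 x hx.mem_Z0) ^ (k + 1)) ⟨u, hu⟩ = 0 :=
      Subtype.ext <| (hLmul _ _).symm.trans (hx.odd_zero u hu)
    have hne' : ((S.mul x).restrict (S.mul01 x hx.mem_Z0) ^ k) ⟨u, hu⟩ ≠ 0 := fun h =>
      hne ((hLmul k ⟨u, hu⟩).trans (congrArg Subtype.val h))
    obtain ⟨b, hb⟩ := exists_basis_pow_apply _ hzero hne' hm
    exact ⟨b, ⟨u, hu⟩, fun i hi => by rw [hb i hi (by lia), hLmul]⟩

end IsFiliformElement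

theorem naturallyGraded_filiform_basis_general (S : ZinbielSuper K Z) (n m : ℕ)
    (hn : finrank K S.Z0 = n) (hm : finrank K S.Z1 = m) (h5 : 5 ≤ n) {N : ℕ}
    (hN : pow0 S (N + 1) = ⊥) {x : Z} (hx : IsFiliformElement S n m x) :
    ∃ (b0 : Basis (Fin n) K S.Z0) (b1 : Basis (Fin m) K S.Z1),
      (∀ i j : ℕ, 1 ≤ i → 1 ≤ j → 2 ≤ i + j → i + j ≤ n - 1 →
        S.mul (sB b0 i) (sB b0 j) = ((i + j - 1).choose j : K) • sB b0 (i + j)) ∧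
      (∀ j : ℕ, 1 ≤ j → j ≤ m - 1 →
        S.mul (sB b0 1) (sB b1 j) = sB b1 (j + 1)) := by
  obtain ⟨b0, hb0⟩ := hx.exists_even_basis hn h5 hN
  obtain ⟨b1, u, hb1⟩ := hx.exists_odd_basis hm
  have hb0_succ (i : ℕ) (hi : i ≤ n - 2) :
      sB b0 (i + 1) = ((S.evenMul ⟨x, hx.mem_Z0⟩ ^ i) ⟨x, hx.mem_Z0⟩ : S.Z0) := by
    rw [sB_succ b0 (by lia), hb0 i _ hi]
  refine ⟨b0, b1, fun i j hi hj _ hij => ?_, fun j hj hjm => ?_⟩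
  · obtain ⟨i, rfl⟩ := Nat.exists_eq_add_of_le' hi
    obtain ⟨j, rfl⟩ := Nat.exists_eq_add_of_le' hj
    rw [show i + 1 + (j + 1) = i + j + 1 + 1 by lia, Nat.add_sub_cancel, hb0_succ i (by lia),
      hb0_succ j (by lia), hb0_succ (i + j + 1) (by lia)]
    exact congrArg Subtype.val (S.isZinbiel_evenMul.pow_apply_mul_pow_apply _ i j)
  · obtain ⟨j, rfl⟩ := Nat.exists_eq_add_of_le' hj
    rw [hb0_succ 0 (by lia), sB_succ b1 (by lia), sB_succ b1 (by lia), hb1, hb1]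
    rfl

/-- A complex naturally graded filiform Zinbiel superalgebra with `dim Z₀ = n ≥ 5`,
`dim Z₁ = m`, has bases `e₁, …, e_n` of `Z₀` and `f₁, …, f_m` of `Z₁` with
`e_i·e_j = C(i+j−1, j) e_{i+j}` for `2 ≤ i+j ≤ n−1` and `e₁·f_j = f_{j+1}` for
`1 ≤ j ≤ m−1`. -/
theorem naturallyGraded_filiform_basis
    {Z : Type*} [AddCommGroup Z] [Module ℂ Z] [FiniteDimensional ℂ Z]
    (S : ZinbielSuper ℂ Z) (n m : ℕ)
    (hn : finrank ℂ S.Z0 = n) (hm : finrank ℂ S.Z1 = m) (h5 : 5 ≤ n)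
    (hng : NaturallyGraded S) (hfil : IsFiliform S n m) :
    ∃ (b0 : Basis (Fin n) ℂ S.Z0) (b1 : Basis (Fin m) ℂ S.Z1),
      (∀ i j : ℕ, 1 ≤ i → 1 ≤ j → 2 ≤ i + j → i + j ≤ n - 1 →
        S.mul (sB b0 i) (sB b0 j) = ((i + j - 1).choose j : ℂ) • sB b0 (i + j)) ∧
      (∀ j : ℕ, 1 ≤ j → j ≤ m - 1 →
        S.mul (sB b0 1) (sB b1 j) = sB b1 (j + 1)) := by
  obtain ⟨N, hN⟩ := hng.exists_pow0_succ_eq_bot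
  obtain ⟨x, hx⟩ := hfil.exists_isFiliformElement
  exact naturallyGraded_filiform_basis_general S n m hn hm h5 hN hx
end

section
/- Let Z = Z₀ ⊕ Z₁ be a nonzero finite-dimensional Zinbiel superalgebra over a field. Then there exists a nonzero homogeneous element e ∈ Z₀ ∪ Z₁ such that e·Z = 0. -/
open Module Submodule

variable {K : Type*} [Field K] {Z : Type*} [AddCommGroup Z] [Module K Z]

/-!
Write `R_z` for right multiplication by `z`. For homogeneous `y`, `z` the Zinbiel identity says
`R_z R_y = R_{yz ± zy}`, so `R_z` and `R_y` commute up to sign and each preserves the kernel of the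
other. As `Z` is spanned by finitely many homogeneous elements, it is therefore enough that every
homogeneous `R_z` is nilpotent: a nonzero homogeneous vector can then be pushed successively into
the kernels of the spanning `R_z`.

For odd `z` we have `R_z² = 0`. For even `e`, induction on the degree gives
`R_{p'(R_e) e} = p(R_e) - p(0)` for every polynomial `p`; hence `p'(R_e) = 0` forces
`p(R_e) = p(0)`. Let `X^k g` annihilate `R_e`, with `g` prime to `X`, and choose `p` with
`p ≡ 0 mod X^(k+1)` and `p ≡ 1 mod g²`. Then `X^k g` divides `p'`, so `p(R_e) = 0`, and it divides
`X^k (1 - p)`, so `R_e^k = R_e^k p(R_e) = 0`. This works in every characteristic.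
-/

section CommonKernel

variable {R M : Type*} [Semiring R] [AddCommMonoid M] [Module R M]

theorem exists_mem_ne_zero_apply_eq_zero {f : End R M} (hf : IsNilpotent f) {P : Set M}
    (hP : Set.MapsTo f P P) {v : M} (hv : v ∈ P) (hv0 : v ≠ 0) : ∃ w ∈ P, w ≠ 0 ∧ f w = 0 := by
  classical
  have hkill : ∃ n, (f ^ n) v = 0 := hf.imp fun n hn => by rw [hn, LinearMap.zero_apply]
  obtain ⟨n, hn⟩ : ∃ n, Nat.find hkill = n + 1 :=
    Nat.exists_eq_succ_of_ne_zero fun h0 => hv0 ((Nat.find_eq_zero hkill).1 h0)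
  refine ⟨(f ^ n) v, ?_, Nat.find_min hkill (hn ▸ n.lt_succ_self), ?_⟩
  · rw [Module.End.pow_apply]
    exact hP.iterate n hv
  · rw [← Module.End.mul_apply, ← pow_succ', ← hn]
    exact Nat.find_spec hkill

theorem exists_mem_ne_zero_forall_apply_eq_zero {ι : Type*} (f : ι → End R M) (s : Finset ι)
    (hnil : ∀ i ∈ s, IsNilpotent (f i))
    (hker : ∀ i ∈ s, ∀ j ∈ s, ∀ v, f i v = 0 → f i (f j v) = 0)
    {P : Set M} (hP : ∀ i ∈ s, Set.MapsTo (f i) P P) {v : M} (hv : v ∈ P) (hv0 : v ≠ 0) :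
    ∃ w ∈ P, w ≠ 0 ∧ ∀ i ∈ s, f i w = 0 := by
  classical
  induction s using Finset.induction_on with
  | empty => exact ⟨v, hv, hv0, by simp⟩
  | insert j s _ ih =>
    simp only [Finset.forall_mem_insert] at hnil hker hP
    obtain ⟨w, hwP, hw0, hw⟩ := ih hnil.2 (fun i hi => (hker.2 i hi).2) hP.2
    have hmaps : Set.MapsTo (f j) {u ∈ P | ∀ i ∈ s, f i u = 0} {u ∈ P | ∀ i ∈ s, f i u = 0} :=
      fun u hu => ⟨hP.1 hu.1, fun i hi => (hker.2 i hi).1 u (hu.2 i hi)⟩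
    obtain ⟨u, ⟨huP, hus⟩, hu0, huj⟩ :=
      exists_mem_ne_zero_apply_eq_zero hnil.1 hmaps ⟨hwP, hw⟩ hw0
    exact ⟨u, huP, hu0, (Finset.forall_mem_insert _ _ _).2 ⟨huj, hus⟩⟩

end CommonKernel

section Polynomial

open Polynomial

theorem exists_pow_mul_dvd_derivative_and_dvd_one_sub (k : ℕ) {g : K[X]} (hg : ¬X ∣ g) :
    ∃ p : K[X], p.coeff 0 = 0 ∧ X ^ k * g ∣ derivative p ∧ g ∣ 1 - p := by
  have hcop : IsCoprime X g := irreducible_X.coprime_iff_not_dvd.2 hg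
  obtain ⟨a, b, hab⟩ := hcop.pow (m := k + 1) (n := 2)
  refine ⟨a * X ^ (k + 1), by simp [pow_succ, ← mul_assoc], ?_, ?_⟩
  · have hXk : X ^ k ∣ derivative (a * X ^ (k + 1)) := by
      simpa using pow_sub_one_dvd_derivative_of_pow_dvd (dvd_mul_left (X ^ (k + 1)) a)
    have hg' : g ∣ derivative (a * X ^ (k + 1)) := by
      rw [eq_sub_of_add_eq hab, derivative_sub, derivative_one, zero_sub, dvd_neg]
      simpa using pow_sub_one_dvd_derivative_of_pow_dvd (dvd_mul_left (g ^ 2) b)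
    exact hcop.pow_left.mul_dvd hXk hg'
  · exact ⟨b * g, by linear_combination -hab⟩

theorem isNilpotent_of_aeval_derivative {A : Type*} [Ring A] [Algebra K A] {a : A}
    (ha : IsAlgebraic K a)
    (h : ∀ p : K[X], p.coeff 0 = 0 → aeval a (derivative p) = 0 → aeval a p = 0) :
    IsNilpotent a := by
  obtain ⟨m, hm0, hm⟩ := ha
  obtain ⟨k, g, hg, rfl⟩ := WfDvdMonoid.max_power_factor hm0 (irreducible_X (R := K))
  obtain ⟨p, hp0, hp', hp⟩ := exists_pow_mul_dvd_derivative_and_dvd_one_sub k hg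
  have hpa : aeval a p = 0 := h p hp0 (aeval_eq_zero_of_dvd_aeval_eq_zero hp' hm)
  have hann : aeval a (X ^ k * (1 - p)) = 0 :=
    aeval_eq_zero_of_dvd_aeval_eq_zero (mul_dvd_mul_left _ hp) hm
  exact ⟨k, by simpa [hpa] using hann⟩

end Polynomial

namespace ZinbielSuper

variable (S : ZinbielSuper K Z)

/-- The set `Z₀ ∪ Z₁` of homogeneous elements. -/
def homogeneous : Set Z := S.Z0 ∪ S.Z1

/-- Right multiplication `R_z : x ↦ x·z` as a linear function of `z`. -/
def mulRight : Z →ₗ[K] End K Z := S.mul.flip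

@[simp]
theorem mulRight_apply (z x : Z) : S.mulRight z x = S.mul x z := rfl

theorem span_homogeneous : span K S.homogeneous = ⊤ := by
  rw [homogeneous, span_union, span_eq, span_eq, S.compl.sup_eq_top]

theorem exists_finset_homogeneous_span_eq_top [FiniteDimensional K Z] :
    ∃ t : Finset Z, ↑t ⊆ S.homogeneous ∧ span K (t : Set Z) = ⊤ := by
  have hfg : (span K S.homogeneous).FG := IsNoetherian.noetherian _
  obtain ⟨t, ht, hspan⟩ := (fg_span_iff_fg_span_finset_subset _).1 hfg
  exact ⟨t, ht, hspan ▸ S.span_homogeneous⟩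

theorem exists_mem_homogeneous_ne_zero [Nontrivial Z] : ∃ v ∈ S.homogeneous, v ≠ 0 := by
  by_contra! h
  exact bot_ne_top ((span_eq_bot.2 h).symm.trans S.span_homogeneous)

variable {S}

theorem mul_mem_homogeneous {x y : Z} (hx : x ∈ S.homogeneous) (hy : y ∈ S.homogeneous) :
    S.mul x y ∈ S.homogeneous := by
  rcases hx with hx | hx <;> rcases hy with hy | hy
  · exact Or.inl (S.mul00 x hx y hy)
  · exact Or.inr (S.mul01 x hx y hy)
  · exact Or.inr (S.mul10 x hx y hy)
  · exact Or.inl (S.mul11 x hx y hy)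

theorem mulRight_mul_mulRight_of_even {y z : Z} (hy : y ∈ S.homogeneous)
    (hz : z ∈ S.homogeneous) (hyz : y ∈ S.Z0 ∨ z ∈ S.Z0) :
    S.mulRight z * S.mulRight y = S.mulRight (S.mul y z + S.mul z y) :=
  LinearMap.ext_on S.span_homogeneous fun x hx => S.zinb_even x y z hx hy hz hyz

theorem mulRight_mul_mulRight_of_odd {y z : Z} (hy : y ∈ S.Z1) (hz : z ∈ S.Z1) :
    S.mulRight z * S.mulRight y = S.mulRight (S.mul y z - S.mul z y) :=
  LinearMap.ext_on S.span_homogeneous fun x hx => S.zinb_odd x y z hx hy hz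

theorem mulRight_commute_or_anticommute {y z : Z} (hy : y ∈ S.homogeneous)
    (hz : z ∈ S.homogeneous) :
    S.mulRight y * S.mulRight z = S.mulRight z * S.mulRight y ∨
      S.mulRight y * S.mulRight z = -(S.mulRight z * S.mulRight y) := by
  by_cases hyz : y ∈ S.Z0 ∨ z ∈ S.Z0
  · left
    rw [mulRight_mul_mulRight_of_even hy hz hyz, mulRight_mul_mulRight_of_even hz hy hyz.symm,
      add_comm]
  · right
    obtain ⟨hy0, hz0⟩ := not_or.1 hyz
    have hy1 : y ∈ S.Z1 := hy.resolve_left hy0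
    have hz1 : z ∈ S.Z1 := hz.resolve_left hz0
    rw [mulRight_mul_mulRight_of_odd hy1 hz1, mulRight_mul_mulRight_of_odd hz1 hy1, ← map_neg,
      neg_sub]

theorem mulRight_mulRight_apply_eq_zero {x y z : Z} (hy : y ∈ S.homogeneous)
    (hz : z ∈ S.homogeneous) (hx : S.mulRight y x = 0) :
    S.mulRight y (S.mulRight z x) = 0 := by
  rcases mulRight_commute_or_anticommute hy hz with h | h <;>
    simpa only [Module.End.mul_apply, LinearMap.neg_apply, hx, map_zero, neg_zero]
      using LinearMap.congr_fun h x

theorem isNilpotent_mulRight_of_odd {z : Z} (hz : z ∈ S.Z1) : IsNilpotent (S.mulRight z) :=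
  ⟨2, by rw [sq, mulRight_mul_mulRight_of_odd hz hz, sub_self, map_zero]⟩

theorem mulRight_pow_apply_self_mem {e : Z} (he : e ∈ S.Z0) (n : ℕ) :
    (S.mulRight e ^ n) e ∈ S.Z0 := by
  induction n with
  | zero => simpa using he
  | succ n ih =>
    rw [pow_succ', Module.End.mul_apply]
    exact S.mul00 _ ih e he

theorem mulRight_succ_nsmul_pow_apply_self {e : Z} (he : e ∈ S.Z0) (n : ℕ) :
    S.mulRight ((n + 1) • (S.mulRight e ^ n) e) = S.mulRight e ^ (n + 1) := by
  induction n with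
  | zero => simp
  | succ n ih =>
    set y := (n + 1) • (S.mulRight e ^ n) e with hy
    have hy0 : y ∈ S.Z0 := S.Z0.smul_of_tower_mem _ (mulRight_pow_apply_self_mem he n)
    have hye : S.mul y e = (n + 1) • (S.mulRight e ^ (n + 1)) e := by
      rw [← mulRight_apply, hy, map_nsmul, pow_succ', Module.End.mul_apply]
    have hey : S.mul e y = (S.mulRight e ^ (n + 1)) e := by rw [← mulRight_apply, ih]
    calc S.mulRight ((n + 1 + 1) • (S.mulRight e ^ (n + 1)) e)
        = S.mulRight (S.mul y e + S.mul e y) := by rw [hye, hey, succ_nsmul]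
      _ = S.mulRight e * S.mulRight y :=
        (mulRight_mul_mulRight_of_even (.inl hy0) (.inl he) (.inl hy0)).symm
      _ = S.mulRight e ^ (n + 1 + 1) := by rw [ih, ← pow_succ']

open Polynomial in
theorem mulRight_aeval_derivative {e : Z} (he : e ∈ S.Z0) (p : K[X]) :
    S.mulRight (aeval (S.mulRight e) (derivative p) e) =
      aeval (S.mulRight e) p - algebraMap K (End K Z) (p.coeff 0) := by
  induction p using Polynomial.induction_on' with
  | add p q hp hq =>
    simp only [map_add, LinearMap.add_apply, coeff_add, hp, hq]
    abel
  | monomial n c =>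
    cases n with
    | zero => simp
    | succ n =>
      have hmon := mulRight_succ_nsmul_pow_apply_self he n
      rw [← Nat.cast_smul_eq_nsmul K, map_smul] at hmon
      simp [aeval_monomial, coeff_monomial, ← hmon, Algebra.algebraMap_eq_smul_one, mul_smul,
        smul_comm c]

theorem isNilpotent_mulRight_of_even [FiniteDimensional K Z] {e : Z} (he : e ∈ S.Z0) :
    IsNilpotent (S.mulRight e) := by
  have halg : IsAlgebraic K (S.mulRight e) := Algebra.IsAlgebraic.isAlgebraic _
  refine isNilpotent_of_aeval_derivative halg fun p hp hp' => ?_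
  simpa [hp, hp'] using (mulRight_aeval_derivative he p).symm

theorem isNilpotent_mulRight [FiniteDimensional K Z] {z : Z} (hz : z ∈ S.homogeneous) :
    IsNilpotent (S.mulRight z) :=
  hz.elim isNilpotent_mulRight_of_even isNilpotent_mulRight_of_odd

end ZinbielSuper

/-- Every nonzero finite-dimensional Zinbiel superalgebra has a nonzero homogeneous
element `e` with `e·Z = 0`. -/
theorem exists_homogeneous_leftAnn (K : Type*) [Field K] (Z : Type*) [AddCommGroup Z]
    [Module K Z] [FiniteDimensional K Z] [Nontrivial Z] (S : ZinbielSuper K Z) :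
    ∃ e : Z, e ≠ 0 ∧ (e ∈ S.Z0 ∨ e ∈ S.Z1) ∧ ∀ x : Z, S.mul e x = 0 := by
  obtain ⟨t, ht, hspan⟩ := S.exists_finset_homogeneous_span_eq_top
  obtain ⟨v, hv, hv0⟩ := S.exists_mem_homogeneous_ne_zero
  obtain ⟨e, he, he0, hker⟩ := exists_mem_ne_zero_forall_apply_eq_zero S.mulRight t
    (fun z hz => ZinbielSuper.isNilpotent_mulRight (ht hz))
    (fun y hy z hz _ => ZinbielSuper.mulRight_mulRight_apply_eq_zero (ht hy) (ht hz))
    (fun z hz _ hx => ZinbielSuper.mul_mem_homogeneous hx (ht hz)) hv hv0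
  have hmul : S.mul e = 0 := LinearMap.ext_on hspan hker
  exact ⟨e, he0, he, LinearMap.congr_fun hmul⟩
end
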